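/- Let B be a finite set of nonzero generalized polynomial functions on (0,∞)². Then there exist L ∈ ℕ and real numbers 0 < γ_1 < γ_2 < … < γ_L such that, setting γ_0 = 0 and γ_{L+1} = ∞, for each a ∈ B and each p ∈ {0,1,…,L}, the zero set of a in the vertical half-strip H_p := (γ_p, γ_{p+1}) × (0,∞) is exactly the union of the graphs of finitely many continuous, monotonic, generalized semialgebraic functions ξ_{a,p,1}, …, ξ_{a,p,s(a,p)} : (γ_p, γ_{p+1}) → (0,∞) with 0 < ξ_{a,p,1}(x) < … < ξ_{a,p,s(a,p)}(x) for all x ∈ (γ_p,γ_{p+1}), where 0 ≤ s(a,p) ≤ K(a), the number of distinct y-exponents of a. Moreover, for all a_1, a_2 ∈ B, all p ≤ L, and all indices j_1 ≤ s(a_1,p), j_2 ≤ s(a_2,p), exactly one of the three relations ξ_{a_1,p,j_1} < ξ_{a_2,p,j_2}, ξ_{a_1,p,j_1} = ξ_{a_2,p,j_2}, ξ_{a_1,p,j_1} > ξ_{a_2,p,j_2} holds uniformly throughout (γ_p, γ_{p+1}). -/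

import Mathlib

open Set

noncomputable section

/-- A one-variable generalized polynomial function (on `(0,∞)`):
`x ↦ ∑ cᵢ x^{αᵢ}` with nonzero real coefficients and distinct real exponents. -/
def IsGenPoly1 (f : ℝ → ℝ) : Prop :=
  ∃ (m : ℕ) (c : Fin m → ℝ) (α : Fin m → ℝ),
    (∀ i, c i ≠ 0) ∧ Function.Injective α ∧
    ∀ x : ℝ, 0 < x → f x = ∑ i, c i * x ^ α i

/-- A generalized polynomial function of two variables (values prescribed on the
open positive quadrant): `(x,y) ↦ ∑ cᵢ x^{αᵢ₁} y^{αᵢ₂}` with nonzero real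
coefficients and distinct real exponent pairs. -/
def IsGenPoly2 (a : ℝ → ℝ → ℝ) : Prop :=
  ∃ (m : ℕ) (c : Fin m → ℝ) (α : Fin m → ℝ × ℝ),
    (∀ i, c i ≠ 0) ∧ Function.Injective α ∧
    ∀ x y : ℝ, 0 < x → 0 < y → a x y = ∑ i, c i * x ^ (α i).1 * y ^ (α i).2

/-- A basic generalized semialgebraic (semisignomial) subset of `(0,∞)²`. -/
def IsBasicGSA2 (S : Set (ℝ × ℝ)) : Prop :=
  ∃ (f : ℝ → ℝ → ℝ) (K : ℕ) (g : Fin K → ℝ → ℝ → ℝ),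
    IsGenPoly2 f ∧ (∀ k, IsGenPoly2 (g k)) ∧
    S = {q : ℝ × ℝ | 0 < q.1 ∧ 0 < q.2 ∧ f q.1 q.2 = 0 ∧ ∀ k, 0 < g k q.1 q.2}

/-- A generalized semialgebraic subset of `(0,∞)²`: a finite union of basic ones. -/
def IsGSA2 (S : Set (ℝ × ℝ)) : Prop :=
  ∃ (J : ℕ) (T : Fin J → Set (ℝ × ℝ)), (∀ j, IsBasicGSA2 (T j)) ∧ S = ⋃ j, T j

/-- The `p`-th interval of the subdivision `0 = γ 0 < γ 1 < … < γ L < γ (L+1) = ∞`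
of `(0,∞)`: it is `(γ p, γ (p+1))` for `p < L` and `(γ L, ∞)` for `p = L`. -/
def vstrip (γ : ℕ → ℝ) (L p : ℕ) : Set ℝ :=
  if p = L then Set.Ioi (γ p) else Set.Ioo (γ p) (γ (p + 1))

/-!
In the coordinates `(u, v) = (log x, log y)` generalized polynomials become exponential sums. The
operator `∂/∂v - γ` can be chosen to kill one term of `P`, and by Rolle's theorem at most one root
of `P` lies in each gap between consecutive roots of the result, so the roots of `P` near an end of
an interval are found by induction on the number of terms.

The point is that a root function `ξ` is tame near such an end: the sign of every exponential sum
along its graph is eventually constant. If some nonzero sum with fewer independent `v`-exponents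
vanishes along `ξ`, then `ξ` is a root of that sum, and one concludes by induction on the number of
independent exponents. Otherwise the germs along `ξ` of such sums are invertible, the remaining
exponential is algebraic over them, so that fractions of exponential sums along `ξ` form a Hardy
field, and Rolle's induction applies over this field. Finally, compactness of `[-∞, ∞]` turns
statements valid near every interval end into a finite subdivision.
-/

open Filter Topology

/-- Exponential sums `t ↦ ∑ cᵦ exp (β t)` with real exponents and coefficients in `R`, as a
formal group algebra; substituting `x = exp t` turns generalized polynomials into such sums. -/
abbrev ExpSum (R : Type*) [CommRing R] := AddMonoidAlgebra R ℝ

namespace ExpSum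

open AddMonoidAlgebra

section Exponents

variable {R : Type*} [CommRing R]

variable (R) in
/-- The exponential sums whose exponents lie in the submonoid `M`. -/
def withExponents (M : AddSubmonoid ℝ) : Subring (ExpSum R) where
  carrier := {P | ∀ β ∈ P.coeff.support, β ∈ M}
  zero_mem' := by simp
  one_mem' β hβ := by
    rw [Finset.mem_singleton.mp (Finsupp.support_single_subset hβ)]
    exact M.zero_mem
  add_mem' hP hQ β hβ := by
    classical
    exact (Finset.mem_union.mp (Finsupp.support_add hβ)).elim (hP β) (hQ β)
  neg_mem' hP β hβ := hP β (by simpa using hβ)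
  mul_mem' {P Q} hP hQ β hβ := by
    classical
    obtain ⟨i, hi, j, hj, rfl⟩ := Finset.mem_add.mp (support_coeff_mul_subset P Q hβ)
    exact M.add_mem (hP i hi) (hQ j hj)

lemma mem_withExponents {P : ExpSum R} {M : AddSubmonoid ℝ} :
    P ∈ withExponents R M ↔ ∀ β ∈ P.coeff.support, β ∈ M := Iff.rfl

lemma single_mem_withExponents {M : AddSubmonoid ℝ} {β : ℝ} (hβ : β ∈ M) (r : R) :
    single β r ∈ withExponents R M := fun α hα => by
  rwa [Finset.mem_singleton.mp (Finsupp.support_single_subset hα)]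

end Exponents

section Eval

variable {R : Type*} [CommRing R] [Algebra ℝ R]

/-- The value at `t` of an exponential sum, its coefficients being specialized along `φ`. -/
def eval (φ : R →ₐ[ℝ] ℝ) (t : ℝ) : ExpSum R →ₐ[ℝ] ℝ :=
  liftNCAlgHom φ
    { toFun := fun β => Real.exp (β.toAdd * t)
      map_one' := by simp
      map_mul' := fun β γ => by simp [add_mul, Real.exp_add] }
    fun _ _ => Commute.all _ _

variable (φ : R →ₐ[ℝ] ℝ) (t : ℝ) (P : ExpSum R)

lemma eval_single (β : ℝ) (r : R) : eval φ t (single β r) = φ r * Real.exp (β * t) := by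
  simp [eval]

lemma eval_eq_sum :
    eval φ t P = ∑ β ∈ P.coeff.support, φ (P.coeff β) * Real.exp (β * t) := by
  conv_lhs => rw [← sum_coeff_single P, Finsupp.sum, map_sum]
  simp only [eval_single]

/-- The operator `∂ - γ`, which multiplies the coefficient of `exp (β t)` by `β - γ`. -/
def shiftedDeriv (γ : ℝ) (P : ExpSum R) : ExpSum R :=
  ofCoeff (.onFinset P.coeff.support (fun β => (β - γ) • P.coeff β) fun β hβ => by
    simpa using right_ne_zero_of_smul hβ)

@[simp]
lemma coeff_shiftedDeriv (γ β : ℝ) : (shiftedDeriv γ P).coeff β = (β - γ) • P.coeff β := rfl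

lemma shiftedDeriv_zero (γ : ℝ) : shiftedDeriv γ (0 : ExpSum R) = 0 := by ext; simp

lemma support_shiftedDeriv (γ : ℝ) :
    (shiftedDeriv γ P).coeff.support = P.coeff.support.erase γ := by
  ext β
  simp [sub_eq_zero]

lemma shiftedDeriv_eq_sub_smul (γ : ℝ) : shiftedDeriv γ P = shiftedDeriv 0 P - γ • P := by
  ext
  simp [sub_smul]

lemma eval_shiftedDeriv (γ : ℝ) :
    eval φ t (shiftedDeriv γ P) =
      ∑ β ∈ P.coeff.support, (β - γ) * (φ (P.coeff β) * Real.exp (β * t)) := by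
  rw [eval_eq_sum, support_shiftedDeriv, Finset.sum_erase]
  · simp [mul_assoc]
  · simp

lemma exp_mul_eval_eq_sum (γ : ℝ) : Real.exp (-(γ * t)) * eval φ t P =
    ∑ β ∈ P.coeff.support, φ (P.coeff β) * Real.exp ((β - γ) * t) := by
  rw [eval_eq_sum, Finset.mul_sum]
  refine Finset.sum_congr rfl fun β _ => ?_
  rw [sub_mul, sub_eq_neg_add, Real.exp_add]
  ring

lemma hasDerivAt_exp_mul_eval (γ : ℝ) :
    HasDerivAt (fun t => Real.exp (-(γ * t)) * eval φ t P)
      (Real.exp (-(γ * t)) * eval φ t (shiftedDeriv γ P)) t := by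
  simp only [exp_mul_eval_eq_sum φ _ P]
  rw [eval_shiftedDeriv, Finset.mul_sum]
  refine HasDerivAt.fun_sum fun β _ => ?_
  refine (((hasDerivAt_id t).const_mul (β - γ)).exp.const_mul (φ (P.coeff β))).congr_deriv ?_
  rw [id_eq, sub_mul, sub_eq_neg_add, Real.exp_add]
  ring

lemma hasDerivAt_eval :
    HasDerivAt (fun t => eval φ t P) (eval φ t (shiftedDeriv 0 P)) t := by
  simpa using hasDerivAt_exp_mul_eval φ t P 0

lemma continuous_eval : Continuous fun t => eval φ t P :=
  continuous_iff_continuousAt.mpr fun t => (hasDerivAt_eval φ t P).continuousAt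

variable {P}

lemma shiftedDeriv_mem_withExponents {M : AddSubmonoid ℝ} (hP : P ∈ withExponents R M) (γ : ℝ) :
    shiftedDeriv γ P ∈ withExponents R M := fun β hβ =>
  hP β (Finset.mem_of_mem_erase (support_shiftedDeriv P γ ▸ hβ))

end Eval

end ExpSum

lemma exists_differentiableAt_implicit {f : ℝ × ℝ → ℝ} {u₀ v₀ f' : ℝ}
    (hf : ContDiffAt ℝ 1 f (u₀, v₀)) (hf' : HasDerivAt (fun v => f (u₀, v)) f' v₀)
    (hne : f' ≠ 0) :
    ∃ ψ : ℝ → ℝ, ψ u₀ = v₀ ∧ DifferentiableAt ℝ ψ u₀ ∧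
      ∀ᶠ u in 𝓝 u₀, f (u, ψ u) = f (u₀, v₀) := by
  have strict := hf.hasStrictFDerivAt one_ne_zero
  have partial_v : fderiv ℝ f (u₀, v₀) (0, 1) = f' :=
    (strict.hasFDerivAt.comp_hasDerivAt v₀
      ((hasDerivAt_const v₀ u₀).prodMk (hasDerivAt_id v₀))).unique hf'
  have invertible : (fderiv ℝ f (u₀, v₀) ∘L ContinuousLinearMap.inr ℝ ℝ ℝ).IsInvertible :=
    ⟨.unitsEquivAut ℝ (Units.mk0 f' hne), by ext; simp [partial_v]⟩
  refine ⟨strict.implicitFunctionOfProdDomain invertible, ?_, ?_,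
    strict.eventually_apply_implicitFunctionOfProdDomain invertible⟩
  · exact (strict.eventually_apply_eq_iff_implicitFunctionOfProdDomain invertible
      ).self_of_nhds.mp rfl
  · exact (strict.hasStrictFDerivAt_implicitFunctionOfProdDomain invertible).differentiableAt

/-- Exponential sums in two variables `(u, v) = (log x, log y)`: exponential sums in `v` whose
coefficients are exponential sums in `u`. -/
abbrev ExpSum₂ := ExpSum (ExpSum ℝ)

namespace ExpSum
open AddMonoidAlgebra

section TwoVariables

/-- Substitution of `u` in the coefficients of an exponential sum in two variables. -/
abbrev evalCoeff (u : ℝ) : ExpSum ℝ →ₐ[ℝ] ℝ := eval (AlgHom.id ℝ ℝ) u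

/-- The value at `(u, v)` of an exponential sum in two variables. -/
abbrev eval₂ (u v : ℝ) : ExpSum₂ →ₐ[ℝ] ℝ := eval (evalCoeff u) v

/-- The partial derivative `∂/∂u`, that is, the derivative of the coefficients. -/
def coeffDeriv (P : ExpSum₂) : ExpSum₂ :=
  ofCoeff (P.coeff.mapRange (shiftedDeriv 0) (shiftedDeriv_zero 0))

variable {P : ExpSum₂}

lemma coeffDeriv_mem_withExponents {M : AddSubmonoid ℝ} (hP : P ∈ withExponents (ExpSum ℝ) M) :
    coeffDeriv P ∈ withExponents (ExpSum ℝ) M := fun β hβ =>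
  hP β (Finsupp.support_mapRange (hf := shiftedDeriv_zero 0) hβ)

variable (P)

lemma eval₂_coeffDeriv (u v : ℝ) : eval₂ u v (coeffDeriv P) =
    ∑ β ∈ P.coeff.support, evalCoeff u (shiftedDeriv 0 (P.coeff β)) * Real.exp (β * v) :=
  (eval_eq_sum _ _ _).trans <| Finset.sum_subset
    (Finsupp.support_mapRange (hf := shiftedDeriv_zero 0)) fun β _ hβ => by
    simp [Finsupp.notMem_support_iff.mp hβ]

lemma hasDerivAt_eval₂_comp {ξ : ℝ → ℝ} {u ξ' : ℝ} (hξ : HasDerivAt ξ ξ' u) :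
    HasDerivAt (fun u => eval₂ u (ξ u) P)
      (eval₂ u (ξ u) (coeffDeriv P) + ξ' * eval₂ u (ξ u) (shiftedDeriv 0 P)) u := by
  rw [funext fun u => eval_eq_sum (evalCoeff u) (ξ u) P, eval₂_coeffDeriv, eval_shiftedDeriv,
    Finset.mul_sum, ← Finset.sum_add_distrib]
  refine HasDerivAt.fun_sum fun β _ => ?_
  refine ((hasDerivAt_eval (.id ℝ ℝ) u (P.coeff β)).mul (hξ.const_mul β).exp).congr_deriv ?_
  ring

lemma contDiff_eval₂ : ContDiff ℝ 1 fun p : ℝ × ℝ => eval₂ p.1 p.2 P := by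
  rw [funext fun p : ℝ × ℝ => eval_eq_sum (evalCoeff p.1) p.2 P]
  refine ContDiff.sum fun β _ => ?_
  simp only [eval_eq_sum _ _ (P.coeff β), AlgHom.coe_id, id_eq]
  fun_prop

lemma continuous_eval₂ : Continuous fun p : ℝ × ℝ => eval₂ p.1 p.2 P :=
  (contDiff_eval₂ P).continuous

lemma continuousAt_eval₂_comp {ξ : ℝ → ℝ} {u : ℝ} (hξ : ContinuousAt ξ u) :
    ContinuousAt (fun u => eval₂ u (ξ u) P) u :=
  ContinuousAt.comp (f := fun u => (u, ξ u)) (g := fun p : ℝ × ℝ => eval₂ p.1 p.2 P)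
    (continuous_eval₂ P).continuousAt (continuousAt_id.prodMk hξ)

lemma exists_differentiableAt_root {u₀ v₀ : ℝ} (hroot : eval₂ u₀ v₀ P = 0)
    (hsimple : eval₂ u₀ v₀ (shiftedDeriv 0 P) ≠ 0) :
    ∃ ψ : ℝ → ℝ, ψ u₀ = v₀ ∧ DifferentiableAt ℝ ψ u₀ ∧ ∀ᶠ u in 𝓝 u₀, eval₂ u (ψ u) P = 0 := by
  simpa only [hroot] using exists_differentiableAt_implicit
    (f := fun p : ℝ × ℝ => eval₂ p.1 p.2 P) (contDiff_eval₂ P).contDiffAt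
    (hasDerivAt_eval (evalCoeff u₀) v₀ P) hsimple

end TwoVariables

end ExpSum

section SignsOnIntervals

variable {f f' : ℝ → ℝ} {s : Set ℝ}

lemma monotoneOn_or_antitoneOn_of_sign_deriv_eq (hs : s.OrdConnected) {σ : SignType}
    (hf : ∀ x ∈ s, HasDerivAt f (f' x) x) (hσ : ∀ x ∈ s, SignType.sign (f' x) = σ) :
    MonotoneOn f s ∨ AntitoneOn f s := by
  have hcont : ContinuousOn f s := fun x hx => (hf x hx).continuousAt.continuousWithinAt
  have hdiff : DifferentiableOn ℝ f (interior s) := fun x hx =>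
    (hf x (interior_subset hx)).differentiableAt.differentiableWithinAt
  have hderiv : ∀ x ∈ interior s, SignType.sign (deriv f x) = σ := fun x hx => by
    rw [(hf x (interior_subset hx)).deriv, hσ x (interior_subset hx)]
  rcases le_total 0 σ with h | h
  · exact .inl <| monotoneOn_of_deriv_nonneg hs.convex hcont hdiff fun x hx =>
      sign_nonneg_iff.mp (hderiv x hx ▸ h)
  · exact .inr <| antitoneOn_of_deriv_nonpos hs.convex hcont hdiff fun x hx =>
      sign_nonpos_iff.mp (hderiv x hx ▸ h)

lemma sign_eq_of_mem_Icc {a b t : ℝ} (hf : MonotoneOn f (Icc a b) ∨ AntitoneOn f (Icc a b))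
    (hab : SignType.sign (f a) = SignType.sign (f b)) (ht : t ∈ Icc a b) :
    SignType.sign (f t) = SignType.sign (f a) := by
  have ha : a ∈ Icc a b := left_mem_Icc.mpr (ht.1.trans ht.2)
  have hb : b ∈ Icc a b := right_mem_Icc.mpr (ht.1.trans ht.2)
  rcases hf with hf | hf
  · exact ((SignType.sign.monotone (hf ht hb ht.2)).trans_eq hab.symm).antisymm
      (SignType.sign.monotone (hf ha ht ht.1))
  · exact (SignType.sign.monotone (hf ha ht ht.1)).antisymm
      (hab.trans_le (SignType.sign.monotone (hf ht hb ht.2)))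

lemma sign_eq_sign_of_continuousOn (hs : s.OrdConnected) (hf : ContinuousOn f s)
    (hne : ∀ x ∈ s, f x ≠ 0) {a b : ℝ} (ha : a ∈ s) (hb : b ∈ s) :
    SignType.sign (f a) = SignType.sign (f b) :=
  hs.isPreconnected.constant (fun x hx =>
    (continuousAt_sign_of_ne_zero (hne x hx)).comp_continuousWithinAt (hf x hx)) ha hb

lemma exists_zero_Ioo_iff_of_strictMonoOn {a b : ℝ} (hab : a < b) (hf : ContinuousOn f (Icc a b))
    (hmono : StrictMonoOn f (Icc a b)) : (∃ v ∈ Ioo a b, f v = 0) ↔ f a * f b < 0 := by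
  have ha : a ∈ Icc a b := left_mem_Icc.mpr hab.le
  have hb : b ∈ Icc a b := right_mem_Icc.mpr hab.le
  constructor
  · rintro ⟨v, hv, h0⟩
    exact mul_neg_of_neg_of_pos (h0 ▸ hmono ha (Ioo_subset_Icc_self hv) hv.1)
      (h0 ▸ hmono (Ioo_subset_Icc_self hv) hb hv.2)
  · intro h
    have hlt := hmono ha hb hab
    exact intermediate_value_Ioo hab.le hf <| (mul_neg_iff.mp h).elim
      (fun h => absurd (h.2.trans h.1) hlt.not_gt) id

lemma exists_zero_Ioo_iff_of_injOn {a b : ℝ} (hab : a < b) (hf : ContinuousOn f (Icc a b))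
    (hinj : InjOn f (Icc a b)) : (∃ v ∈ Ioo a b, f v = 0) ↔ f a * f b < 0 := by
  rcases hf.strictMonoOn_of_injOn_Icc' hab.le hinj with hmono | hanti
  · exact exists_zero_Ioo_iff_of_strictMonoOn hab hf hmono
  · simpa using exists_zero_Ioo_iff_of_strictMonoOn hab hf.neg hanti.neg

end SignsOnIntervals

lemma finite_of_forall_card_lt {α : Type*} {s : Set α} {n : ℕ}
    (h : ∀ t : Finset α, ↑t ⊆ s → t.card < n) : s.Finite := by
  by_contra hinf
  obtain ⟨t, hts, hcard⟩ := Set.Infinite.exists_subset_card_eq hinf n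
  exact (h t hts).ne hcard

namespace ExpSum
open AddMonoidAlgebra

section Roots

variable {R : Type*} [CommRing R] [Algebra ℝ R] {φ : R →ₐ[ℝ] ℝ} {P : ExpSum R}

lemma sign_exp_mul_eval (γ t : ℝ) :
    SignType.sign (Real.exp (-(γ * t)) * eval φ t P) = SignType.sign (eval φ t P) := by
  rw [sign_mul, sign_pos (Real.exp_pos _), one_mul]

lemma exists_root_shiftedDeriv_of_exp_mul_eq (γ : ℝ) {a b : ℝ} (hab : a < b)
    (h : Real.exp (-(γ * a)) * eval φ a P = Real.exp (-(γ * b)) * eval φ b P) :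
    ∃ t ∈ Ioo a b, eval φ t (shiftedDeriv γ P) = 0 := by
  obtain ⟨t, ht, h0⟩ := exists_hasDerivAt_eq_zero hab
    (fun t _ => (hasDerivAt_exp_mul_eval φ t P γ).continuousAt.continuousWithinAt) h
    (fun t _ => hasDerivAt_exp_mul_eval φ t P γ)
  exact ⟨t, ht, (mul_eq_zero.mp h0).resolve_left (Real.exp_ne_zero _)⟩

lemma exists_root_shiftedDeriv (γ : ℝ) {a b : ℝ} (hab : a < b) (ha : eval φ a P = 0)
    (hb : eval φ b P = 0) : ∃ t ∈ Ioo a b, eval φ t (shiftedDeriv γ P) = 0 :=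
  exists_root_shiftedDeriv_of_exp_mul_eq γ hab (by rw [ha, hb, mul_zero, mul_zero])

lemma exists_root_Ioo_iff {γ a b : ℝ} (hab : a < b)
    (hne : ∀ t ∈ Ioo a b, eval φ t (shiftedDeriv γ P) ≠ 0) :
    (∃ t ∈ Ioo a b, eval φ t P = 0) ↔ eval φ a P * eval φ b P < 0 := by
  have not_lt {x y : ℝ} (hx : a ≤ x) (hy : y ≤ b)
      (h : Real.exp (-(γ * x)) * eval φ x P = Real.exp (-(γ * y)) * eval φ y P) : ¬ x < y := by
    intro hxy
    obtain ⟨t, ht, h0⟩ := exists_root_shiftedDeriv_of_exp_mul_eq γ hxy h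
    exact hne t (Ioo_subset_Ioo hx hy ht) h0
  have := exists_zero_Ioo_iff_of_injOn (f := fun t => Real.exp (-(γ * t)) * eval φ t P) hab
    (fun t _ => (hasDerivAt_exp_mul_eval φ t P γ).continuousAt.continuousWithinAt)
    fun x hx y hy h => le_antisymm
      (le_of_not_gt (not_lt hy.1 hx.2 h.symm)) (le_of_not_gt (not_lt hx.1 hy.2 h))
  simpa only [mul_eq_zero, Real.exp_ne_zero, false_or, ← sign_eq_neg_one_iff, sign_mul,
    sign_pos (Real.exp_pos _), one_mul] using this

/-- No coefficient of `P` is killed by the specialization `φ`. -/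
def Nondegenerate (φ : R →ₐ[ℝ] ℝ) (P : ExpSum R) : Prop :=
  ∀ β ∈ P.coeff.support, φ (P.coeff β) ≠ 0

lemma Nondegenerate.shiftedDeriv (hφ : Nondegenerate φ P) (γ : ℝ) :
    Nondegenerate φ (shiftedDeriv γ P) := by
  intro β hβ
  rw [support_shiftedDeriv, Finset.mem_erase] at hβ
  rw [coeff_shiftedDeriv, map_smul]
  exact smul_ne_zero (sub_ne_zero.mpr hβ.1) (hφ β hβ.2)

lemma Nondegenerate.card_roots_lt (hφ : Nondegenerate φ P) (hP : P ≠ 0) {Z : Finset ℝ}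
    (hZ : ∀ z ∈ Z, eval φ z P = 0) : Z.card < P.coeff.support.card := by
  induction hn : P.coeff.support.card generalizing P Z with
  | zero => exact absurd (by simpa using hn) hP
  | succ n ih =>
    obtain ⟨γ, hγ⟩ : P.coeff.support.Nonempty := Finset.card_pos.mp (by omega)
    have hn' : (ExpSum.shiftedDeriv γ P).coeff.support.card = n := by
      rw [support_shiftedDeriv, Finset.card_erase_of_mem hγ, hn, Nat.add_sub_cancel]
    by_cases hQ : ExpSum.shiftedDeriv γ P = 0
    · have hsupp : P.coeff.support = {γ} := by
        simpa [hQ] using (Finset.insert_erase hγ).symm.trans <|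
          congrArg (insert γ) (support_shiftedDeriv P γ).symm
      rw [Finset.card_eq_zero.mpr (Finset.eq_empty_of_forall_notMem fun z hz => ?_)]
      · exact n.succ_pos
      · have := hZ z hz
        rw [eval_eq_sum, hsupp, Finset.sum_singleton] at this
        exact mul_ne_zero (hφ γ hγ) (Real.exp_ne_zero _) this
    · have bound (T : Finset ℝ) (hT : ∀ z ∈ T, eval φ z (ExpSum.shiftedDeriv γ P) = 0) :
          T.card < n := ih (hφ.shiftedDeriv γ) hQ hT hn'
      have hfin : {z | eval φ z (ExpSum.shiftedDeriv γ P) = 0}.Finite :=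
        finite_of_forall_card_lt bound
      have interleaved : Z.card ≤ hfin.toFinset.card + 1 :=
        Finset.card_le_of_interleaved fun a ha b hb hab _ => by
          obtain ⟨t, ht, h⟩ := exists_root_shiftedDeriv γ hab (hZ a ha) (hZ b hb)
          exact ⟨t, hfin.mem_toFinset.mpr h, ht.1, ht.2⟩
      have := bound hfin.toFinset fun z hz => hfin.mem_toFinset.mp hz
      omega

lemma Nondegenerate.finite_roots (hφ : Nondegenerate φ P) (hP : P ≠ 0) :
    {t | eval φ t P = 0}.Finite :=
  finite_of_forall_card_lt fun _ hZ => hφ.card_roots_lt hP hZ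

variable (P) in
lemma exists_finset_sign_const : ∃ 𝒬 : Finset (ExpSum R), ∀ φ : R →ₐ[ℝ] ℝ, ∀ a b : ℝ,
    (∀ Q ∈ 𝒬, SignType.sign (eval φ a Q) = SignType.sign (eval φ b Q)) →
      ∀ t ∈ Icc a b, SignType.sign (eval φ t P) = SignType.sign (eval φ a P) := by
  classical
  induction hn : P.coeff.support.card generalizing P with
  | zero =>
    obtain rfl : P = 0 := by simpa using hn
    exact ⟨∅, by simp⟩
  | succ n ih =>
    obtain ⟨γ, hγ⟩ : P.coeff.support.Nonempty := Finset.card_pos.mp (by omega)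
    obtain ⟨𝒬, h𝒬⟩ := ih (ExpSum.shiftedDeriv γ P) <| by
      rw [support_shiftedDeriv, Finset.card_erase_of_mem hγ, hn, Nat.add_sub_cancel]
    refine ⟨insert P 𝒬, fun φ a b hab t ht => ?_⟩
    have sign_deriv := h𝒬 φ a b fun Q hQ => hab Q (Finset.mem_insert_of_mem hQ)
    rw [← sign_exp_mul_eval γ t, ← sign_exp_mul_eval γ a]
    refine sign_eq_of_mem_Icc (f := fun t => Real.exp (-(γ * t)) * eval φ t P)
      (monotoneOn_or_antitoneOn_of_sign_deriv_eq ordConnected_Icc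
        (fun t _ => hasDerivAt_exp_mul_eval φ t P γ)
        fun t ht => (sign_exp_mul_eval γ t).trans (sign_deriv t ht)) ?_ ht
    simpa only [sign_exp_mul_eval] using hab P (Finset.mem_insert_self P 𝒬)

-- A form of Thom's lemma.
lemma exists_finset_sign_separating (hP : P ≠ 0) :
    ∃ 𝒬 : Finset (ExpSum R), ∀ φ : R →ₐ[ℝ] ℝ, Nondegenerate φ P → ∀ a b : ℝ,
      eval φ a P = 0 → eval φ b P = 0 →
      (∀ Q ∈ 𝒬, SignType.sign (eval φ a Q) = SignType.sign (eval φ b Q)) → a = b := by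
  obtain ⟨𝒬, h𝒬⟩ := exists_finset_sign_const P
  refine ⟨𝒬, fun φ hφ => ?_⟩
  have not_lt (a b : ℝ) (hab : a < b) (ha : eval φ a P = 0) :
      ¬ ∀ Q ∈ 𝒬, SignType.sign (eval φ a Q) = SignType.sign (eval φ b Q) := fun hs =>
    Icc_infinite hab <| (hφ.finite_roots hP).subset fun t ht =>
      sign_eq_zero_iff.mp <| (h𝒬 φ a b hs t ht).trans (by rw [ha, sign_zero])
  intro a b ha hb hs
  rcases lt_trichotomy a b with hab | rfl | hba
  · exact (not_lt a b hab ha hs).elim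
  · rfl
  · exact (not_lt b a hba hb fun Q hQ => (hs Q hQ).symm).elim

end Roots
end ExpSum

/-- `l` is an end of an interval of the real line, that is, `𝓝[<] t`, `𝓝[>] t`, `atBot` or
`atTop`, encoded by two properties that these filters share. -/
class IsIntervalEnd (l : Filter ℝ) : Prop extends NeBot l where
  exists_isOpen_ordConnected : ∀ s ∈ l, ∃ I ∈ l, I ⊆ s ∧ IsOpen I ∧ OrdConnected I
  Iio_mem_or_Ioi_mem : ∀ z, Iio z ∈ l ∨ Ioi z ∈ l

instance : IsIntervalEnd atTop where
  exists_isOpen_ordConnected s hs := by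
    obtain ⟨a, ha⟩ := mem_atTop_sets.mp hs
    exact ⟨Ioi a, Ioi_mem_atTop a, fun u hu => ha u (le_of_lt hu), isOpen_Ioi, ordConnected_Ioi⟩
  Iio_mem_or_Ioi_mem z := .inr (Ioi_mem_atTop z)

instance : IsIntervalEnd atBot where
  exists_isOpen_ordConnected s hs := by
    obtain ⟨a, ha⟩ := mem_atBot_sets.mp hs
    exact ⟨Iio a, Iio_mem_atBot a, fun u hu => ha u (le_of_lt hu), isOpen_Iio, ordConnected_Iio⟩
  Iio_mem_or_Ioi_mem z := .inl (Iio_mem_atBot z)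

instance (t : ℝ) : IsIntervalEnd (𝓝[>] t) where
  exists_isOpen_ordConnected s hs := by
    obtain ⟨a, ha, h⟩ := mem_nhdsGT_iff_exists_Ioo_subset.mp hs
    exact ⟨Ioo t a, Ioo_mem_nhdsGT ha, h, isOpen_Ioo, ordConnected_Ioo⟩
  Iio_mem_or_Ioi_mem z := (lt_or_ge t z).imp
    (fun h => mem_nhdsWithin_of_mem_nhds (Iio_mem_nhds h))
    fun h => mem_of_superset self_mem_nhdsWithin (Ioi_subset_Ioi h)

instance (t : ℝ) : IsIntervalEnd (𝓝[<] t) where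
  exists_isOpen_ordConnected s hs := by
    obtain ⟨a, ha, h⟩ := mem_nhdsLT_iff_exists_Ioo_subset.mp hs
    exact ⟨Ioo a t, Ioo_mem_nhdsLT ha, h, isOpen_Ioo, ordConnected_Ioo⟩
  Iio_mem_or_Ioi_mem z := (lt_or_ge z t).symm.imp
    (fun h => mem_of_superset self_mem_nhdsWithin (Iio_subset_Iio h))
    fun h => mem_nhdsWithin_of_mem_nhds (Ioi_mem_nhds h)

section IntervalEnd

variable {l : Filter ℝ} [IsIntervalEnd l] {p : ℝ → Prop}

lemma exists_isOpen_ordConnected_of_eventually (h : ∀ᶠ u in l, p u) :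
    ∃ I ∈ l, IsOpen I ∧ OrdConnected I ∧ ∀ u ∈ I, p u := by
  obtain ⟨I, hI, hIp, hopen, hconn⟩ := IsIntervalEnd.exists_isOpen_ordConnected _ h
  exact ⟨I, hI, hopen, hconn, hIp⟩

lemma eventually_eventually_nhds_of_eventually (h : ∀ᶠ u in l, p u) :
    ∀ᶠ u in l, ∀ᶠ w in 𝓝 u, p w := by
  obtain ⟨I, hI, hopen, -, hIp⟩ := exists_isOpen_ordConnected_of_eventually h
  filter_upwards [hI] with u hu
  exact eventually_of_mem (hopen.mem_nhds hu) hIp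

variable (l) in
lemma eventually_notMem_of_finite {s : Set ℝ} (hs : s.Finite) : ∀ᶠ u in l, u ∉ s := by
  have (z : ℝ) : ∀ᶠ u in l, u ≠ z := by
    rcases IsIntervalEnd.Iio_mem_or_Ioi_mem (l := l) z with h | h
    · filter_upwards [h] with u hu using ne_of_lt hu
    · filter_upwards [h] with u hu using ne_of_gt hu
  filter_upwards [hs.eventually_all.mpr fun z _ => this z] with u hu hus
  exact hu u hus rfl

variable (l) in
lemma mem_or_compl_mem_of_isUpperSet {s : Set ℝ} (hs : IsUpperSet s) : s ∈ l ∨ sᶜ ∈ l := by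
  by_cases hne : s.Nonempty
  · by_cases hbdd : BddBelow s
    · refine (IsIntervalEnd.Iio_mem_or_Ioi_mem (l := l) (sInf s)).symm.imp (fun h => ?_) fun h => ?_
      · filter_upwards [h] with u hu
        obtain ⟨x, hx, hxu⟩ := exists_lt_of_csInf_lt hne hu
        exact hs hxu.le hx
      · filter_upwards [h] with u hu using notMem_of_lt_csInf hu hbdd
    · refine .inl (univ_mem' fun u => ?_)
      obtain ⟨x, hx, hxu⟩ := not_bddBelow_iff.mp hbdd u
      exact hs hxu.le hx
  · exact .inr (univ_mem' fun u hu => hne ⟨u, hu⟩)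

lemma eventually_or_eventually_not_of_monotoneOn {I : Set ℝ} (hI : I ∈ l) (hp : MonotoneOn p I) :
    (∀ᶠ u in l, p u) ∨ ∀ᶠ u in l, ¬ p u := by
  have mem_upperClosure_iff (u : ℝ) (hu : u ∈ I) : u ∈ upperClosure {x ∈ I | p x} ↔ p u :=
    ⟨fun ⟨x, ⟨hxI, hx⟩, hxu⟩ => hp hxI hu hxu hx, fun h => ⟨u, ⟨hu, h⟩, le_rfl⟩⟩
  refine (mem_or_compl_mem_of_isUpperSet l (upperClosure {x ∈ I | p x}).upper).imp ?_ ?_ <;>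
  · intro h
    filter_upwards [h, hI] with u hu huI
    simpa [mem_upperClosure_iff u huI] using hu

end IntervalEnd

/-- The sign of `f` is constant near the end `l`. -/
def HasEventualSign (l : Filter ℝ) (f : ℝ → ℝ) : Prop :=
  ∃ σ : SignType, ∀ᶠ u in l, SignType.sign (f u) = σ

namespace HasEventualSign

variable {l : Filter ℝ} {f g : ℝ → ℝ}

lemma congr (hf : HasEventualSign l f) (hfg : ∀ᶠ u in l, f u = g u) : HasEventualSign l g := by
  obtain ⟨σ, hσ⟩ := hf
  exact ⟨σ, by filter_upwards [hσ, hfg] with u hu hfg using hfg ▸ hu⟩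

lemma mul (hf : HasEventualSign l f) (hg : HasEventualSign l g) :
    HasEventualSign l fun u => f u * g u := by
  obtain ⟨σ, hσ⟩ := hf
  obtain ⟨τ, hτ⟩ := hg
  exact ⟨σ * τ, by filter_upwards [hσ, hτ] with u hf hg; rw [sign_mul, hf, hg]⟩

lemma neg (hf : HasEventualSign l f) : HasEventualSign l fun u => -f u := by
  obtain ⟨σ, hσ⟩ := hf
  exact ⟨-σ, by filter_upwards [hσ] with u hf; rw [Left.sign_neg, hf]⟩

lemma of_eventually_eq_zero (hf : ∀ᶠ u in l, f u = 0) : HasEventualSign l f :=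
  ⟨0, hf.mono fun _ hu => sign_eq_zero_iff.mpr hu⟩

lemma lt_or_eq_or_gt (h : HasEventualSign l fun u => f u - g u) :
    (∀ᶠ u in l, f u < g u) ∨ (∀ᶠ u in l, f u = g u) ∨ ∀ᶠ u in l, g u < f u := by
  obtain ⟨σ, hσ⟩ := h
  rcases σ.trichotomy with rfl | rfl | rfl
  · exact .inl (hσ.mono fun u hu => sub_neg.mp (sign_eq_neg_one_iff.mp hu))
  · exact .inr (.inl (hσ.mono fun u hu => sub_eq_zero.mp (sign_eq_zero_iff.mp hu)))
  · exact .inr (.inr (hσ.mono fun u hu => sub_pos.mp (sign_eq_one_iff.mp hu)))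

lemma eventually_eq_zero_or_ne_zero (hf : HasEventualSign l f) :
    (∀ᶠ u in l, f u = 0) ∨ ∀ᶠ u in l, f u ≠ 0 := by
  obtain ⟨σ, hσ⟩ := hf
  refine (eq_or_ne σ 0).imp (fun h => ?_) fun h => ?_
  · exact hσ.mono fun u hu => sign_eq_zero_iff.mp (hu.trans h)
  · exact hσ.mono fun u hu h0 => h (hu.symm.trans (sign_eq_zero_iff.mpr h0))

lemma eventually_eq_zero (hf : HasEventualSign l f) (h : ∃ᶠ u in l, f u = 0) :
    ∀ᶠ u in l, f u = 0 :=
  hf.eventually_eq_zero_or_ne_zero.resolve_right h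

variable [IsIntervalEnd l]

lemma of_continuousAt (hf : ∀ᶠ u in l, ContinuousAt f u) (hne : ∀ᶠ u in l, f u ≠ 0) :
    HasEventualSign l f := by
  obtain ⟨I, hI, -, hconn, h⟩ := exists_isOpen_ordConnected_of_eventually (hf.and hne)
  obtain ⟨a, ha⟩ := Filter.nonempty_of_mem hI
  refine ⟨SignType.sign (f a), eventually_of_mem hI fun u hu => ?_⟩
  exact sign_eq_sign_of_continuousOn hconn (fun x hx => (h x hx).1.continuousWithinAt)
    (fun x hx => (h x hx).2) hu ha

lemma of_monotoneOn {I : Set ℝ} (hI : I ∈ l) (hf : MonotoneOn f I) : HasEventualSign l f := by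
  rcases eventually_or_eventually_not_of_monotoneOn (p := fun u => 0 < f u) hI
    fun x hx y hy hxy h => h.trans_le (hf hx hy hxy) with hpos | hnonpos
  · exact ⟨1, hpos.mono fun u hu => sign_pos hu⟩
  rcases eventually_or_eventually_not_of_monotoneOn (p := fun u => 0 ≤ f u) hI
    fun x hx y hy hxy h => h.trans (hf hx hy hxy) with hnonneg | hneg
  · exact of_eventually_eq_zero <| by
      filter_upwards [hnonpos, hnonneg] with u h₁ h₂ using le_antisymm (not_lt.mp h₁) h₂
  · exact ⟨-1, hneg.mono fun u hu => sign_neg (not_le.mp hu)⟩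

lemma of_hasDerivAt {f' : ℝ → ℝ} (hf : ∀ᶠ u in l, HasDerivAt f (f' u) u)
    (hf' : HasEventualSign l f') : HasEventualSign l f := by
  obtain ⟨σ, hσ⟩ := hf'
  obtain ⟨I, hI, -, hconn, h⟩ := exists_isOpen_ordConnected_of_eventually (hf.and hσ)
  rcases monotoneOn_or_antitoneOn_of_sign_deriv_eq hconn (fun u hu => (h u hu).1)
    fun u hu => (h u hu).2 with hf | hf
  · exact of_monotoneOn hI hf
  · simpa using (of_monotoneOn hI hf.neg).neg

end HasEventualSign

namespace ExpSum
open AddMonoidAlgebra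

section Tame

variable {l : Filter ℝ}

/-- A function that is well behaved near the end `l`: it is differentiable there, and the signs of
its derivative and of all exponential sums along its graph are eventually constant. -/
structure Tame (l : Filter ℝ) (ξ : ℝ → ℝ) : Prop where
  exists_hasDerivAt : ∃ ξ' : ℝ → ℝ,
    (∀ᶠ u in l, HasDerivAt ξ (ξ' u) u) ∧ HasEventualSign l ξ'
  hasEventualSign (P : ExpSum₂) : HasEventualSign l fun u => eval₂ u (ξ u) P

lemma Tame.eventually_continuousAt {ξ : ℝ → ℝ} (hξ : Tame l ξ) :
    ∀ᶠ u in l, ContinuousAt ξ u := by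
  obtain ⟨ξ', hξ', -⟩ := hξ.exists_hasDerivAt
  exact hξ'.mono fun u hu => hu.continuousAt

variable [IsIntervalEnd l]

variable (l) in
lemma eventually_evalCoeff_ne_zero {b : ExpSum ℝ} (hb : b ≠ 0) :
    ∀ᶠ u in l, evalCoeff u b ≠ 0 :=
  eventually_notMem_of_finite l <| Nondegenerate.finite_roots (φ := .id ℝ ℝ)
    (fun _ hβ => Finsupp.mem_support_iff.mp hβ) hb

variable (l) in
lemma eventually_nondegenerate (P : ExpSum₂) : ∀ᶠ u in l, Nondegenerate (evalCoeff u) P :=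
  (Finset.eventually_all _).mpr fun _ hβ =>
    eventually_evalCoeff_ne_zero l (Finsupp.mem_support_iff.mp hβ)

namespace Tame

variable {ξ η : ℝ → ℝ}

lemma congr (hξ : Tame l ξ) (h : ∀ᶠ u in l, ξ u = η u) : Tame l η := by
  obtain ⟨ξ', hξ', hsign⟩ := hξ.exists_hasDerivAt
  refine ⟨⟨ξ', ?_, hsign⟩, fun P => (hξ.hasEventualSign P).congr ?_⟩
  · filter_upwards [hξ', eventually_eventually_nhds_of_eventually h] with u hu hu'
    exact hu.congr_of_eventuallyEq (hu'.mono fun w hw => hw.symm)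
  · filter_upwards [h] with u hu
    rw [hu]

lemma hasEventualSign_sub (hξ : Tame l ξ) (hη : Tame l η) {P : ExpSum₂} (hP : P ≠ 0)
    (hξP : ∀ᶠ u in l, eval₂ u (ξ u) P = 0) (hηP : ∀ᶠ u in l, eval₂ u (η u) P = 0) :
    HasEventualSign l fun u => ξ u - η u := by
  obtain ⟨𝒬, h𝒬⟩ := exists_finset_sign_separating hP
  choose σ hσ using hξ.hasEventualSign
  choose τ hτ using hη.hasEventualSign
  by_cases hστ : ∀ Q ∈ 𝒬, σ Q = τ Q
  · refine .of_eventually_eq_zero ?_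
    filter_upwards [hξP, hηP, eventually_nondegenerate l P,
      (Finset.eventually_all 𝒬).mpr fun Q _ => (hσ Q).and (hτ Q)] with u hξ hη hu hsign
    refine sub_eq_zero.mpr (h𝒬 _ hu _ _ hξ hη fun Q hQ => ?_)
    rw [(hsign Q hQ).1, (hsign Q hQ).2, hστ Q hQ]
  · push Not at hστ
    obtain ⟨Q, -, hne⟩ := hστ
    refine .of_continuousAt ?_ ?_
    · filter_upwards [hξ.eventually_continuousAt, hη.eventually_continuousAt] with u hξ hη
      exact hξ.sub hη
    · filter_upwards [hσ Q, hτ Q] with u hξQ hηQ heq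
      rw [sub_eq_zero.mp heq] at hξQ
      exact hne (hξQ.symm.trans hηQ)

end Tame

end Tame

section RootsBetween

variable {R : Type*} [CommRing R] [Algebra ℝ R] {φ : R →ₐ[ℝ] ℝ} {P : ExpSum R}

lemma tendsto_exp_mul_eval {F : Filter ℝ} {β : ℝ}
    (hβ : ∀ α ∈ P.coeff.support, α ≠ β → Tendsto (fun v => (α - β) * v) F atBot) :
    Tendsto (fun v => Real.exp (-(β * v)) * eval φ v P) F (𝓝 (φ (P.coeff β))) := by
  have limit_eq : φ (P.coeff β) =
      ∑ α ∈ P.coeff.support, φ (P.coeff α) * if α = β then 1 else 0 := by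
    simp +contextual [map_zero]
  simp only [exp_mul_eval_eq_sum]
  rw [limit_eq]
  refine tendsto_finsetSum _ fun α hα => Tendsto.const_mul _ ?_
  split_ifs with h
  · simpa [h] using tendsto_const_nhds
  · exact Real.tendsto_exp_atBot.comp (hβ α hα h)

lemma Nondegenerate.eventually_sign_eval {F : Filter ℝ} {β : ℝ} (hφ : Nondegenerate φ P)
    (hβP : β ∈ P.coeff.support)
    (hβ : ∀ α ∈ P.coeff.support, α ≠ β → Tendsto (fun v => (α - β) * v) F atBot) :
    ∀ᶠ v in F, SignType.sign (eval φ v P) = SignType.sign (φ (P.coeff β)) := by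
  have := (continuousAt_sign_of_ne_zero (hφ β hβP)).tendsto.comp (tendsto_exp_mul_eval hβ)
  rw [nhds_discrete, tendsto_pure] at this
  exact this.mono fun v hv => (sign_exp_mul_eval β v).symm.trans hv

end RootsBetween

section Gaps

variable {l : Filter ℝ} [IsIntervalEnd l] {P : ExpSum₂}

lemma exists_eventually_sign_eval₂ {F : Filter ℝ} {β : ℝ} (hβP : β ∈ P.coeff.support)
    (hβ : ∀ α ∈ P.coeff.support, α ≠ β → Tendsto (fun v => (α - β) * v) F atBot) :
    ∃ σ : SignType, ∀ᶠ u in l, ∀ᶠ v in F, SignType.sign (eval₂ u v P) = σ := by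
  obtain ⟨σ, hσ⟩ : HasEventualSign l fun u => evalCoeff u (P.coeff β) :=
    .of_continuousAt (.of_forall fun u => (continuous_eval (.id ℝ ℝ) (P.coeff β)).continuousAt)
      (eventually_evalCoeff_ne_zero l (Finsupp.mem_support_iff.mp hβP))
  refine ⟨σ, ?_⟩
  filter_upwards [hσ, eventually_nondegenerate l P] with u hσ hu
  exact (hu.eventually_sign_eval hβP hβ).mono fun v hv => hv.trans hσ

lemma exists_eventually_sign_eval₂_atBot (hP : P ≠ 0) :
    ∃ σ : SignType, ∀ᶠ u in l, ∀ᶠ v in atBot, SignType.sign (eval₂ u v P) = σ := by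
  have hne : P.coeff.support.Nonempty := by simpa [Finset.nonempty_iff_ne_empty] using hP
  refine exists_eventually_sign_eval₂ (P.coeff.support.min'_mem hne) fun α hα hne' => ?_
  exact tendsto_id.const_mul_atBot
    (sub_pos.mpr (lt_of_le_of_ne (P.coeff.support.min'_le α hα) hne'.symm))

lemma exists_eventually_sign_eval₂_atTop (hP : P ≠ 0) :
    ∃ σ : SignType, ∀ᶠ u in l, ∀ᶠ v in atTop, SignType.sign (eval₂ u v P) = σ := by
  have hne : P.coeff.support.Nonempty := by simpa [Finset.nonempty_iff_ne_empty] using hP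
  refine exists_eventually_sign_eval₂ (P.coeff.support.max'_mem hne) fun α hα hne' => ?_
  exact tendsto_id.const_mul_atTop_of_neg
    (sub_neg.mpr (lt_of_le_of_ne (P.coeff.support.le_max' α hα) hne'))

variable {ι : Type*} {η : ι → ℝ → ℝ}

/-- The points of the line over `u` lying above the branches `η i` with `i ∈ S` and below all
others. -/
def gap (η : ι → ℝ → ℝ) (S : Set ι) (u : ℝ) : Set ℝ :=
  {v | (∀ i ∈ S, η i u < v) ∧ ∀ i ∉ S, v < η i u}

variable {S : Set ι} [Finite ι]

lemma gap_nonempty_iff {u : ℝ} : (gap η S u).Nonempty ↔ ∀ i ∈ S, ∀ j ∉ S, η i u < η j u := by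
  classical
  constructor
  · rintro ⟨v, hlo, hhi⟩ i hi j hj
    exact (hlo i hi).trans (hhi j hj)
  · intro h
    have hS := S.toFinite.image (η · u)
    have hS' := Sᶜ.toFinite.image (η · u)
    obtain ⟨v, hlo, hhi⟩ := Order.exists_between_finsets hS.toFinset hS'.toFinset
      (by simpa using h)
    exact ⟨v, by simpa using hlo, by simpa using hhi⟩

lemma eventually_mem_gap_of_continuousAt {u₀ : ℝ} {ψ : ℝ → ℝ}
    (hη : ∀ i, ContinuousAt (η i) u₀) (hψ : ContinuousAt ψ u₀) (h : ψ u₀ ∈ gap η S u₀) :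
    ∀ᶠ u in 𝓝 u₀, ψ u ∈ gap η S u := by
  refine (eventually_all.mpr fun i => ?_).and (eventually_all.mpr fun i => ?_) <;>
    refine eventually_imp_distrib_left.mpr fun hi => ?_
  · exact (hη i).eventually_lt hψ (h.1 i hi)
  · exact hψ.eventually_lt (hη i) (h.2 i hi)

lemma exists_eventually_le_iff (h : ∀ i j, HasEventualSign l fun u => η i u - η j u) :
    ∃ u₀, ∀ᶠ u in l, ∀ i j, η i u ≤ η j u ↔ η i u₀ ≤ η j u₀ := by
  choose σ hσ using h
  have := eventually_all.mpr fun i => eventually_all.mpr fun j => hσ i j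
  obtain ⟨u₀, hu₀⟩ := this.exists
  refine ⟨u₀, this.mono fun u hu i j => ?_⟩
  rw [← sub_nonpos, ← sign_nonpos_iff, hu, ← hu₀ i j, sign_nonpos_iff, sub_nonpos]

lemma exists_sign_below (hP : P ≠ 0) {u₀ : ℝ}
    (hle : ∀ᶠ u in l, ∀ i j, η i u ≤ η j u ↔ η i u₀ ≤ η j u₀)
    (hη : ∀ i, HasEventualSign l fun u => eval₂ u (η i u) P) :
    ∃ σ : SignType, ∀ᶠ u in l, ∀ x, (∀ i ∈ S, η i u < x) →
      ∃ v < x, (∀ i ∈ S, η i u ≤ v) ∧ SignType.sign (eval₂ u v P) = σ := by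
  rcases S.eq_empty_or_nonempty with rfl | hS
  · obtain ⟨σ, hσ⟩ := exists_eventually_sign_eval₂_atBot (l := l) hP
    refine ⟨σ, hσ.mono fun u hu x _ => ?_⟩
    obtain ⟨v, hv, hvx⟩ := (hu.and (eventually_lt_atBot x)).exists
    exact ⟨v, hvx, by simp, hv⟩
  · obtain ⟨i, hi, hmax⟩ := exists_max_image S (η · u₀) S.toFinite hS
    obtain ⟨σ, hσ⟩ := hη i
    refine ⟨σ, ?_⟩
    filter_upwards [hσ, hle] with u hu hle x hx
    exact ⟨η i u, hx i hi, fun j hj => (hle j i).mpr (hmax j hj), hu⟩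

lemma exists_sign_above (hP : P ≠ 0) {u₀ : ℝ}
    (hle : ∀ᶠ u in l, ∀ i j, η i u ≤ η j u ↔ η i u₀ ≤ η j u₀)
    (hη : ∀ i, HasEventualSign l fun u => eval₂ u (η i u) P) :
    ∃ σ : SignType, ∀ᶠ u in l, ∀ x, (∀ i ∈ S, x < η i u) →
      ∃ v > x, (∀ i ∈ S, v ≤ η i u) ∧ SignType.sign (eval₂ u v P) = σ := by
  rcases S.eq_empty_or_nonempty with rfl | hS
  · obtain ⟨σ, hσ⟩ := exists_eventually_sign_eval₂_atTop (l := l) hP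
    refine ⟨σ, hσ.mono fun u hu x _ => ?_⟩
    obtain ⟨v, hv, hvx⟩ := (hu.and (eventually_gt_atTop x)).exists
    exact ⟨v, hvx, by simp, hv⟩
  · obtain ⟨i, hi, hmin⟩ := exists_min_image S (η · u₀) S.toFinite hS
    obtain ⟨σ, hσ⟩ := hη i
    refine ⟨σ, ?_⟩
    filter_upwards [hσ, hle] with u hu hle x hx
    exact ⟨η i u, hx i hi, fun j hj => (hle i j).mpr (hmin j hj), hu⟩

end Gaps

/-- Near the end `l`, the zero set of `P` is the union of the graphs of the tame functions `η i`. -/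
structure Resolves {ι : Type*} (l : Filter ℝ) (P : ExpSum₂) (η : ι → ℝ → ℝ) : Prop where
  tame (i : ι) : Tame l (η i)
  root_iff : ∀ᶠ u in l, ∀ v, eval₂ u v P = 0 ↔ ∃ i, η i u = v

section Resolves

variable {ι : Type*} {l : Filter ℝ} {P : ExpSum₂} {η : ι → ℝ → ℝ}

lemma Resolves.eventually_root (h : Resolves l P η) (i : ι) : ∀ᶠ u in l, eval₂ u (η i u) P = 0 :=
  h.root_iff.mono fun _ hu => (hu _).mpr ⟨i, rfl⟩

lemma Resolves.hasEventualSign_sub [IsIntervalEnd l] (h : Resolves l P η) (hP : P ≠ 0) (i j : ι) :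
    HasEventualSign l fun u => η i u - η j u :=
  (h.tame i).hasEventualSign_sub (h.tame j) hP (h.eventually_root i) (h.eventually_root j)

lemma Resolves.of_forall_root [Finite ι] (hη : ∀ i, Tame l (η i))
    (hroot : ∀ᶠ u in l, ∀ v, eval₂ u v P = 0 → ∃ i, η i u = v) :
    Resolves l P fun i : {i // ∀ᶠ u in l, eval₂ u (η i u) P = 0} => η i := by
  refine ⟨fun i => hη i, ?_⟩
  have nonroot (i : ι) : ∀ᶠ u in l, eval₂ u (η i u) P = 0 → ∀ᶠ u in l, eval₂ u (η i u) P = 0 :=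
    ((hη i).hasEventualSign P).eventually_eq_zero_or_ne_zero.elim (fun h => .of_forall fun _ _ => h)
      fun h => h.mono fun _ hu h0 => absurd h0 hu
  filter_upwards [hroot, eventually_all.mpr nonroot,
    eventually_all.mpr fun i : {i // ∀ᶠ u in l, eval₂ u (η i u) P = 0} => i.2]
    with u hroot hnonroot hisroot v
  refine ⟨fun hv => ?_, ?_⟩
  · obtain ⟨i, rfl⟩ := hroot v hv
    exact ⟨⟨i, hnonroot i hv⟩, rfl⟩
  · rintro ⟨i, rfl⟩
    exact hisroot i

variable {γ u v : ℝ} {S : Set ι}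

lemma ne_of_mem_gap (hv : v ∈ gap η S u) (i : ι) : η i u ≠ v := by
  by_cases hi : i ∈ S
  · exact (hv.1 i hi).ne
  · exact (hv.2 i hi).ne'

lemma ordConnected_gap : (gap η S u).OrdConnected where
  out' _ hx _ hy _ hz :=
    ⟨fun i hi => (hx.1 i hi).trans_le hz.1, fun i hi => hz.2.trans_lt (hy.2 i hi)⟩

lemma root_unique_of_mem_gap {w : ℝ}
    (hne : ∀ v ∈ gap η S u, eval₂ u v (shiftedDeriv γ P) ≠ 0) (hv : v ∈ gap η S u)
    (hw : w ∈ gap η S u) (hvP : eval₂ u v P = 0) (hwP : eval₂ u w P = 0) : v = w := by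
  have not_root_lt {x y : ℝ} (hx : x ∈ gap η S u) (hy : y ∈ gap η S u) (hxP : eval₂ u x P = 0)
      (hyP : eval₂ u y P = 0) : ¬ x < y := fun hxy => by
    obtain ⟨t, ht, h0⟩ := exists_root_shiftedDeriv γ hxy hxP hyP
    exact hne t (ordConnected_gap.out hx hy (Ioo_subset_Icc_self ht)) h0
  exact le_antisymm (not_lt.mp (not_root_lt hw hv hwP hvP)) (not_lt.mp (not_root_lt hv hw hvP hwP))

lemma exists_root_mem_gap_iff {σ τ : SignType}
    (hne : ∀ v ∈ gap η S u, eval₂ u v (shiftedDeriv γ P) ≠ 0)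
    (hlo : ∀ x, (∀ i ∈ S, η i u < x) →
      ∃ v < x, (∀ i ∈ S, η i u ≤ v) ∧ SignType.sign (eval₂ u v P) = σ)
    (hhi : ∀ x, (∀ i ∈ Sᶜ, x < η i u) →
      ∃ v > x, (∀ i ∈ Sᶜ, v ≤ η i u) ∧ SignType.sign (eval₂ u v P) = τ) :
    (∃ v ∈ gap η S u, eval₂ u v P = 0) ↔ (gap η S u).Nonempty ∧ σ * τ = -1 := by
  have bracket {x : ℝ} (hx : x ∈ gap η S u) : ∃ a b, a < x ∧ x < b ∧ Ioo a b ⊆ gap η S u ∧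
      ((∃ v ∈ Ioo a b, eval₂ u v P = 0) ↔ σ * τ = -1) := by
    obtain ⟨a, hax, ha, rfl⟩ := hlo x hx.1
    obtain ⟨b, hxb, hb, rfl⟩ := hhi x hx.2
    have hsub : Ioo a b ⊆ gap η S u := fun t ht =>
      ⟨fun i hi => (ha i hi).trans_lt ht.1, fun i hi => ht.2.trans_le (hb i hi)⟩
    refine ⟨a, b, hax, hxb, hsub, ?_⟩
    rw [exists_root_Ioo_iff (hax.trans hxb) fun v hv => hne v (hsub hv), ← sign_eq_neg_one_iff,
      sign_mul]
  constructor
  · rintro ⟨x, hx, h0⟩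
    obtain ⟨a, b, hax, hxb, -, hiff⟩ := bracket hx
    exact ⟨⟨x, hx⟩, hiff.mp ⟨x, ⟨hax, hxb⟩, h0⟩⟩
  · rintro ⟨⟨x, hx⟩, hστ⟩
    obtain ⟨a, b, -, -, hsub, hiff⟩ := bracket hx
    obtain ⟨v, hv, h0⟩ := hiff.mpr hστ
    exact ⟨v, hsub hv, h0⟩

namespace Resolves

variable (hη : Resolves l (shiftedDeriv γ P) η) (S)
include hη

lemma eventually_ne_zero_of_mem_gap :
    ∀ᶠ u in l, ∀ v ∈ gap η S u, eval₂ u v (shiftedDeriv γ P) ≠ 0 :=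
  hη.root_iff.mono fun u hu v hv h0 => by
    obtain ⟨i, hi⟩ := (hu v).mp h0
    exact ne_of_mem_gap hv i hi

variable [Finite ι] [IsIntervalEnd l]

lemma exists_root_mem_gap_or_forall_ne (hP : shiftedDeriv γ P ≠ 0) :
    (∀ᶠ u in l, ∃ v ∈ gap η S u, eval₂ u v P = 0) ∨
      ∀ᶠ u in l, ∀ v ∈ gap η S u, eval₂ u v P ≠ 0 := by
  have hP' : P ≠ 0 := fun h => hP (h ▸ shiftedDeriv_zero γ)
  obtain ⟨u₀, hle⟩ := exists_eventually_le_iff (hη.hasEventualSign_sub hP)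
  have hsign (i : ι) := (hη.tame i).hasEventualSign P
  obtain ⟨σ, hσ⟩ := exists_sign_below (S := S) hP' hle hsign
  obtain ⟨τ, hτ⟩ := exists_sign_above (S := Sᶜ) hP' hle hsign
  have hiff : ∀ᶠ u in l, (∃ v ∈ gap η S u, eval₂ u v P = 0) ↔
      (∀ i ∈ S, ∀ j ∉ S, ¬ η j u₀ ≤ η i u₀) ∧ σ * τ = -1 := by
    filter_upwards [hle, hσ, hτ, hη.eventually_ne_zero_of_mem_gap S] with u hle hσ hτ hne
    rw [exists_root_mem_gap_iff hne hσ hτ, gap_nonempty_iff]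
    simp only [← hle, not_le]
  by_cases h : (∀ i ∈ S, ∀ j ∉ S, ¬ η j u₀ ≤ η i u₀) ∧ σ * τ = -1
  · exact .inl (hiff.mono fun u hu => hu.mpr h)
  · exact .inr (hiff.mono fun u hu v hv h0 => h (hu.mp ⟨v, hv, h0⟩))

lemma eventually_differentiableAt {ξ : ℝ → ℝ} (hgap : ∀ᶠ u in l, ξ u ∈ gap η S u)
    (hroot : ∀ᶠ u in l, eval₂ u (ξ u) P = 0) : ∀ᶠ u in l, DifferentiableAt ℝ ξ u := by
  have hne := hη.eventually_ne_zero_of_mem_gap S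
  filter_upwards [hne, hgap, hroot, eventually_all.mpr fun i => (hη.tame i).eventually_continuousAt,
    eventually_eventually_nhds_of_eventually (hne.and (hgap.and hroot))]
    with u hu hgap hroot hcont hnear
  have simple : eval₂ u (ξ u) (shiftedDeriv 0 P) ≠ 0 := by
    simpa [shiftedDeriv_eq_sub_smul P γ, hroot] using hu _ hgap
  obtain ⟨ψ, hψu, hψ, hψroot⟩ := exists_differentiableAt_root P hroot simple
  refine hψ.congr_of_eventuallyEq ?_
  filter_upwards [hnear, hψroot,
    eventually_mem_gap_of_continuousAt hcont hψ.continuousAt (hψu ▸ hgap)] with w hw hψw hψgap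
  exact root_unique_of_mem_gap hw.1 hw.2.1 hψgap hw.2.2 hψw

end Resolves

end Resolves
end ExpSum

section ConnectedReduced

open Polynomial

variable {C : Type*} [CommRing C]

lemma eq_zero_or_eq_zero_of_isCoprime (hidem : ∀ e : C, IsIdempotentElem e → e = 0 ∨ e = 1)
    {g h : C} (hgh : IsCoprime g h) (hmul : g * h = 0) : g = 0 ∨ h = 0 := by
  obtain ⟨a, b, hab⟩ := hgh
  rcases hidem (a * g) (by unfold IsIdempotentElem; linear_combination a * g * hab - a * b * hmul)
    with he | he
  · left
    linear_combination b * hmul + g * he - g * hab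
  · right
    linear_combination a * hmul - h * he

variable [Nontrivial C] [IsReduced C] (hidem : ∀ e : C, IsIdempotentElem e → e = 0 ∨ e = 1)
include hidem

lemma exists_prime_map_eq_zero {A : Type*} [CommRing A] [IsDomain A] [IsPrincipalIdealRing A]
    (f : A →+* C) {p : A} (hp : p ≠ 0) (hfp : f p = 0) : ∃ r, Prime r ∧ f r = 0 := by
  revert hp hfp
  induction p using UniqueFactorizationMonoid.induction_on_coprime with
  | h0 => exact fun h => absurd rfl h
  | h1 hx => exact fun _ h => absurd (h ▸ hx.map f) not_isUnit_zero
  | hpr n hx =>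
    intro _ h
    rw [map_pow] at h
    exact ⟨_, hx, eq_zero_of_pow_eq_zero h⟩
  | hcp hxy hx hy =>
    intro hne h
    rw [map_mul] at h
    rcases eq_zero_or_eq_zero_of_isCoprime hidem (hxy.isCoprime.map f) h with h | h
    · exact hx (left_ne_zero_of_mul hne) h
    · exact hy (right_ne_zero_of_mul hne) h

lemma map_eq_zero_or_isUnit {A : Type*} [CommRing A] [IsDomain A] [IsPrincipalIdealRing A]
    (f : A →+* C) {p : A} (hp : p ≠ 0) (hfp : f p = 0) (q : A) : f q = 0 ∨ IsUnit (f q) := by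
  obtain ⟨r, hr, hfr⟩ := exists_prime_map_eq_zero hidem f hp hfp
  by_cases hdvd : r ∣ q
  · exact .inl (zero_dvd_iff.mp (hfr ▸ map_dvd f hdvd))
  · have hcop := (hr.irreducible.coprime_iff_not_dvd.mpr hdvd).map f
    rw [hfr, isCoprime_zero_left] at hcop
    exact .inr hcop

lemma eval₂_eq_zero_or_isUnit {A : Type*} [CommRing A] [IsDomain A] (f : A →+* C)
    (hf : ∀ a ≠ 0, IsUnit (f a)) (x : C) {p : A[X]} (hp : p ≠ 0) (hpx : p.eval₂ f x = 0)
    (q : A[X]) : q.eval₂ f x = 0 ∨ IsUnit (q.eval₂ f x) := by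
  let F := FractionRing A
  let lift : F →+* C :=
    IsLocalization.lift (M := nonZeroDivisors A) fun a => hf a (nonZeroDivisors.ne_zero a.2)
  have eval₂_lift (q : A[X]) : (q.map (algebraMap A F)).eval₂ lift x = q.eval₂ f x := by
    rw [eval₂_map, IsLocalization.lift_comp]
  simpa only [coe_eval₂RingHom, eval₂_lift] using map_eq_zero_or_isUnit hidem
    (eval₂RingHom lift x) (p := p.map (algebraMap A F))
    ((Polynomial.map_ne_zero_iff (IsFractionRing.injective A F)).mpr hp)
    (by rwa [coe_eval₂RingHom, eval₂_lift]) (q.map (algebraMap A F))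

end ConnectedReduced

section ContinuousGerms

instance (l : Filter ℝ) : IsReduced (Germ l ℝ) where
  eq_zero g := by
    rintro ⟨n, hn⟩
    induction g using Germ.inductionOn with
    | h f => exact Germ.coe_eq.mpr ((Germ.coe_eq.mp hn).mono fun u hu => eq_zero_of_pow_eq_zero hu)

/-- The ring of germs along `l` of real functions that are continuous at all points near `l`. -/
def continuousGerms (l : Filter ℝ) : Subring (Germ l ℝ) where
  carrier := {g | ∃ f : ℝ → ℝ, (∀ᶠ u in l, ContinuousAt f u) ∧ (f : Germ l ℝ) = g}
  zero_mem' := ⟨0, .of_forall fun _ => continuousAt_const, rfl⟩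
  one_mem' := ⟨1, .of_forall fun _ => continuousAt_const, rfl⟩
  add_mem' := by
    rintro _ _ ⟨f, hf, rfl⟩ ⟨g, hg, rfl⟩
    exact ⟨f + g, by filter_upwards [hf, hg] with u hf hg using hf.add hg, rfl⟩
  mul_mem' := by
    rintro _ _ ⟨f, hf, rfl⟩ ⟨g, hg, rfl⟩
    exact ⟨f * g, by filter_upwards [hf, hg] with u hf hg using hf.mul hg, rfl⟩
  neg_mem' := by
    rintro _ ⟨f, hf, rfl⟩
    exact ⟨-f, by filter_upwards [hf] with u hf using hf.neg, rfl⟩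

variable {l : Filter ℝ}

instance : IsReduced (continuousGerms l) :=
  isReduced_of_injective (continuousGerms l).subtype Subtype.val_injective

lemma continuousGerms.eq_zero_or_eq_one [IsIntervalEnd l] (e : continuousGerms l)
    (he : IsIdempotentElem e) : e = 0 ∨ e = 1 := by
  obtain ⟨_, f, hf, rfl⟩ := e
  have hidem : ∀ᶠ u in l, f u * f u = f u := Germ.coe_eq.mp (congrArg Subtype.val he)
  have zero_or_one : ∀ᶠ u in l, f u = 0 ∨ f u = 1 :=
    hidem.mono fun u hu => IsIdempotentElem.iff_eq_zero_or_one.mp hu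
  have hsign : HasEventualSign l fun u => f u - 1 / 2 :=
    .of_continuousAt (hf.mono fun u hu => hu.sub continuousAt_const) <| by
      filter_upwards [zero_or_one] with u hu
      rcases hu with hu | hu <;> norm_num [hu]
  rcases hsign.lt_or_eq_or_gt with h | h | h
  · left
    refine Subtype.ext (Germ.coe_eq.mpr ?_)
    filter_upwards [zero_or_one, h] with u hu h
    exact hu.resolve_right fun h1 => by norm_num [h1] at h
  · right
    refine Subtype.ext (Germ.coe_eq.mpr ?_)
    filter_upwards [zero_or_one, h] with u hu h
    rcases hu with hu | hu <;> norm_num [hu] at h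
  · right
    refine Subtype.ext (Germ.coe_eq.mpr ?_)
    filter_upwards [zero_or_one, h] with u hu h
    exact hu.resolve_left fun h0 => by norm_num [h0] at h

lemma continuousGerms.eventually_ne_zero {f : ℝ → ℝ} {hf : (f : Germ l ℝ) ∈ continuousGerms l}
    (hunit : IsUnit (⟨f, hf⟩ : continuousGerms l)) : ∀ᶠ u in l, f u ≠ 0 := by
  obtain ⟨⟨_, g, _, rfl⟩, hfg⟩ := hunit.exists_right_inv
  have hfg : ∀ᶠ u in l, f u * g u = 1 := Germ.coe_eq.mp (congrArg Subtype.val hfg)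
  exact hfg.mono fun u hu => left_ne_zero_of_mul_eq_one hu

lemma continuousGerms.isUnit {f : ℝ → ℝ} (hf : ∀ᶠ u in l, ContinuousAt f u)
    (hne : ∀ᶠ u in l, f u ≠ 0) : IsUnit (⟨f, f, hf, rfl⟩ : continuousGerms l) := by
  have hinv : ∀ᶠ u in l, ContinuousAt f⁻¹ u := by
    filter_upwards [hf, hne] with u hf hne using hf.inv₀ hne
  refine .of_mul_eq_one ⟨_, f⁻¹, hinv, rfl⟩ (Subtype.ext (Germ.coe_eq.mpr ?_))
  exact hne.mono fun u hu => mul_inv_cancel₀ hu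

end ContinuousGerms

namespace ExpSum
open AddMonoidAlgebra

section Dichotomy

lemma exists_polynomial_of_mem_withExponents_sup {R : Type*} [CommRing R] {M : AddSubmonoid ℝ}
    {δ : ℝ} {Q : ExpSum R} (hQ : Q ∈ withExponents R (M ⊔ .closure {δ})) :
    ∃ q : Polynomial (withExponents R M),
      q.eval₂ (withExponents R M).subtype (single δ 1) = Q := by
  change Q ∈ (Polynomial.eval₂RingHom (withExponents R M).subtype (single δ 1)).range
  rw [← sum_coeff_single Q]
  refine Subring.sum_mem _ fun β hβ => ?_
  obtain ⟨m, hm, d, hd, rfl⟩ := AddSubmonoid.mem_sup.mp (hQ β hβ)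
  obtain ⟨n, rfl⟩ := AddSubmonoid.mem_closure_singleton.mp hd
  refine ⟨.C ⟨_, single_mem_withExponents hm (Q.coeff (m + n • δ))⟩ * .X ^ n, ?_⟩
  simp [single_pow, single_mul_single]

variable {l : Filter ℝ} {ξ : ℝ → ℝ}

/-- The ring homomorphism sending `Q` to the germ of `u ↦ Q(u, ξ u)`. -/
def evalGerm (hξ : ∀ᶠ u in l, ContinuousAt ξ u) : ExpSum₂ →+* continuousGerms l :=
  ((Germ.coeRingHom l).comp (RingHom.pi fun u => (eval₂ u (ξ u)).toRingHom)).codRestrict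
    (continuousGerms l) fun Q =>
      ⟨fun u => eval₂ u (ξ u) Q, hξ.mono fun _ hu => continuousAt_eval₂_comp Q hu, rfl⟩

lemma evalGerm_eq_zero_iff (hξ : ∀ᶠ u in l, ContinuousAt ξ u) {Q : ExpSum₂} :
    evalGerm hξ Q = 0 ↔ ∀ᶠ u in l, eval₂ u (ξ u) Q = 0 :=
  Subtype.ext_iff.trans Germ.coe_eq

lemma isUnit_evalGerm_iff (hξ : ∀ᶠ u in l, ContinuousAt ξ u) {Q : ExpSum₂} :
    IsUnit (evalGerm hξ Q) ↔ ∀ᶠ u in l, eval₂ u (ξ u) Q ≠ 0 :=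
  ⟨continuousGerms.eventually_ne_zero, continuousGerms.isUnit
    (hξ.mono fun _ hu => continuousAt_eval₂_comp Q hu)⟩

lemma eventually_eq_zero_or_ne_zero_of_mem_withExponents_sup [IsIntervalEnd l]
    (hξ : ∀ᶠ u in l, ContinuousAt ξ u) {M : AddSubmonoid ℝ}
    (hM : ∀ T ∈ withExponents (ExpSum ℝ) M, T ≠ 0 → ∀ᶠ u in l, eval₂ u (ξ u) T ≠ 0)
    {δ : ℝ} {P : ExpSum₂} (hPM : P ∈ withExponents (ExpSum ℝ) (M ⊔ .closure {δ})) (hP : P ≠ 0)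
    (hPξ : ∀ᶠ u in l, eval₂ u (ξ u) P = 0) {Q : ExpSum₂}
    (hQM : Q ∈ withExponents (ExpSum ℝ) (M ⊔ .closure {δ})) :
    (∀ᶠ u in l, eval₂ u (ξ u) Q = 0) ∨ ∀ᶠ u in l, eval₂ u (ξ u) Q ≠ 0 := by
  obtain ⟨p, rfl⟩ := exists_polynomial_of_mem_withExponents_sup hPM
  obtain ⟨q, rfl⟩ := exists_polynomial_of_mem_withExponents_sup hQM
  have hp : p ≠ 0 := by
    rintro rfl
    exact hP (Polynomial.eval₂_zero _ _)
  rw [← evalGerm_eq_zero_iff hξ, Polynomial.hom_eval₂] at hPξ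
  rw [← evalGerm_eq_zero_iff hξ, ← isUnit_evalGerm_iff hξ, Polynomial.hom_eval₂]
  exact eval₂_eq_zero_or_isUnit continuousGerms.eq_zero_or_eq_one
    ((evalGerm hξ).comp (withExponents (ExpSum ℝ) M).subtype) (fun T hT =>
      (isUnit_evalGerm_iff hξ).mpr (hM T T.2 (Subtype.coe_ne_coe.mpr hT))) _ hp hPξ q

end Dichotomy

end ExpSum

section Hardy

variable {l : Filter ℝ} {H : Subalgebra ℝ (ℝ → ℝ)}

/-- The germs at `l` of the functions in the algebra `H` form a Hardy field. -/
structure IsHardy (l : Filter ℝ) (H : Subalgebra ℝ (ℝ → ℝ)) : Prop where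
  hasEventualSign : ∀ f ∈ H, HasEventualSign l f
  div_mem : ∀ f ∈ H, ∀ g ∈ H, (∀ᶠ u in l, g u ≠ 0) → f / g ∈ H
  exists_hasDerivAt : ∀ f ∈ H, ∃ f' ∈ H, ∀ᶠ u in l, HasDerivAt f (f' u) u

lemma hasDerivAt_sum_mul_exp {s : Finset ℝ} {q q' : ℝ → ℝ → ℝ} {ξ : ℝ → ℝ} {ξ' u : ℝ} (γ : ℝ)
    (hq : ∀ β ∈ s, HasDerivAt (q β) (q' β u) u) (hξ : HasDerivAt ξ ξ' u) :
    HasDerivAt (fun u => ∑ β ∈ s, q β u * Real.exp ((β - γ) * ξ u))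
      (Real.exp (-γ * ξ u) * ∑ β ∈ s, (q' β u + (β - γ) * (q β u * ξ')) * Real.exp (β * ξ u))
      u := by
  rw [Finset.mul_sum]
  refine HasDerivAt.fun_sum fun β hβ => ?_
  refine ((hq β hβ).mul (hξ.const_mul (β - γ)).exp).congr_deriv ?_
  rw [show (β - γ) * ξ u = -γ * ξ u + β * ξ u by ring, Real.exp_add]
  ring

lemma HasEventualSign.exp_mul {f : ℝ → ℝ} (hf : HasEventualSign l f) (g : ℝ → ℝ) :
    HasEventualSign l fun u => Real.exp (g u) * f u := by
  obtain ⟨σ, hσ⟩ := hf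
  exact ⟨σ, hσ.mono fun u hu => by rw [sign_mul, sign_pos (Real.exp_pos _), one_mul, hu]⟩

/- Rolle's induction: divide by one term, which then becomes constant, and differentiate. -/
lemma IsHardy.hasEventualSign_sum_mul_exp [IsIntervalEnd l] (hH : IsHardy l H) {ξ ξ' : ℝ → ℝ}
    (hξ' : ξ' ∈ H) (hξ : ∀ᶠ u in l, HasDerivAt ξ (ξ' u) u) (s : Finset ℝ) {h : ℝ → ℝ → ℝ}
    (hh : ∀ β, h β ∈ H) : HasEventualSign l fun u => ∑ β ∈ s, h β u * Real.exp (β * ξ u) := by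
  induction s using Finset.induction_on generalizing h with
  | empty => exact .of_eventually_eq_zero (by simp)
  | insert γ s hγ ih =>
    rcases (hH.hasEventualSign _ (hh γ)).eventually_eq_zero_or_ne_zero with hzero | hne
    · refine (ih hh).congr (hzero.mono fun u hu => ?_)
      rw [Finset.sum_insert hγ, hu, zero_mul, zero_add]
    have hq (β : ℝ) : h β / h γ ∈ H := hH.div_mem _ (hh β) _ (hh γ) hne
    choose q' hq' hderiv using fun β => hH.exists_hasDerivAt _ (hq β)
    have quotient_sign : HasEventualSign l fun u =>
        1 + ∑ β ∈ s, (h β / h γ) u * Real.exp ((β - γ) * ξ u) := by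
      refine .of_hasDerivAt ?_ ((ih (h := fun β => q' β + (β - γ) • ((h β / h γ) * ξ')) fun β =>
        H.add_mem (hq' β) (H.smul_mem (H.mul_mem (hq β) hξ') _)).exp_mul fun u => -γ * ξ u)
      filter_upwards [hξ, (Finset.eventually_all s).mpr fun β _ => hderiv β] with u hξ hderiv
      exact (hasDerivAt_sum_mul_exp γ hderiv hξ).const_add 1
    refine (((hH.hasEventualSign _ (hh γ)).mul quotient_sign).exp_mul fun u => γ * ξ u).congr ?_
    filter_upwards [hne] with u hu
    rw [Finset.sum_insert hγ, mul_add, mul_add, mul_one, Finset.mul_sum, Finset.mul_sum, mul_comm]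
    refine congrArg _ (Finset.sum_congr rfl fun β _ => ?_)
    rw [show β * ξ u = γ * ξ u + (β - γ) * ξ u by ring, Real.exp_add, Pi.div_apply]
    field_simp

end Hardy

namespace ExpSum
open AddMonoidAlgebra

section ImplicitDerivative

variable {P : ExpSum₂} {ξ : ℝ → ℝ} {u : ℝ}

/-- The derivative of `N` along a root of `P`, up to the factor `∂P/∂v`. -/
def implicitDeriv (P N : ExpSum₂) : ExpSum₂ :=
  coeffDeriv N * shiftedDeriv 0 P - coeffDeriv P * shiftedDeriv 0 N

lemma implicitDeriv_mem_withExponents {M : AddSubmonoid ℝ} {N : ExpSum₂}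
    (hP : P ∈ withExponents (ExpSum ℝ) M) (hN : N ∈ withExponents (ExpSum ℝ) M) :
    implicitDeriv P N ∈ withExponents (ExpSum ℝ) M :=
  Subring.sub_mem _
    (Subring.mul_mem _ (coeffDeriv_mem_withExponents hN) (shiftedDeriv_mem_withExponents hP 0))
    (Subring.mul_mem _ (coeffDeriv_mem_withExponents hP) (shiftedDeriv_mem_withExponents hN 0))

lemma hasDerivAt_root (hξ : DifferentiableAt ℝ ξ u) (hroot : ∀ᶠ w in 𝓝 u, eval₂ w (ξ w) P = 0)
    (hsimple : eval₂ u (ξ u) (shiftedDeriv 0 P) ≠ 0) :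
    HasDerivAt ξ (-eval₂ u (ξ u) (coeffDeriv P) / eval₂ u (ξ u) (shiftedDeriv 0 P)) u := by
  have total_deriv := (hasDerivAt_eval₂_comp P hξ.hasDerivAt).unique
    ((hasDerivAt_const u 0).congr_of_eventuallyEq hroot)
  refine hξ.hasDerivAt.congr_deriv ?_
  rw [eq_div_iff hsimple]
  linarith

lemma hasDerivAt_eval₂_root (N : ExpSum₂)
    (hξ : HasDerivAt ξ (-eval₂ u (ξ u) (coeffDeriv P) / eval₂ u (ξ u) (shiftedDeriv 0 P)) u)
    (hsimple : eval₂ u (ξ u) (shiftedDeriv 0 P) ≠ 0) :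
    HasDerivAt (fun u => eval₂ u (ξ u) N)
      (eval₂ u (ξ u) (implicitDeriv P N) / eval₂ u (ξ u) (shiftedDeriv 0 P)) u := by
  refine (hasDerivAt_eval₂_comp N hξ).congr_deriv ?_
  rw [implicitDeriv, map_sub, map_mul, map_mul]
  field_simp
  ring

end ImplicitDerivative

section Tameness

variable {l : Filter ℝ} {ξ : ℝ → ℝ} {M : AddSubmonoid ℝ}

/-- The functions that near `l` are fractions of exponential sums with `v`-exponents in `M`,
evaluated along `v = ξ u`. -/
def fractionsAlong (l : Filter ℝ) (ξ : ℝ → ℝ) (M : AddSubmonoid ℝ) : Subalgebra ℝ (ℝ → ℝ) where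
  carrier := {f | ∃ N ∈ withExponents (ExpSum ℝ) M, ∃ T ∈ withExponents (ExpSum ℝ) M,
    ∀ᶠ u in l, eval₂ u (ξ u) T ≠ 0 ∧ f u = eval₂ u (ξ u) N / eval₂ u (ξ u) T}
  add_mem' := by
    rintro f g ⟨N₁, hN₁, T₁, hT₁, hf⟩ ⟨N₂, hN₂, T₂, hT₂, hg⟩
    refine ⟨N₁ * T₂ + T₁ * N₂, Subring.add_mem _ (Subring.mul_mem _ hN₁ hT₂)
      (Subring.mul_mem _ hT₁ hN₂), T₁ * T₂, Subring.mul_mem _ hT₁ hT₂, ?_⟩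
    filter_upwards [hf, hg] with u ⟨hT₁, hf⟩ ⟨hT₂, hg⟩
    simp only [map_mul, map_add]
    exact ⟨mul_ne_zero hT₁ hT₂, by rw [Pi.add_apply, hf, hg, div_add_div _ _ hT₁ hT₂]⟩
  mul_mem' := by
    rintro f g ⟨N₁, hN₁, T₁, hT₁, hf⟩ ⟨N₂, hN₂, T₂, hT₂, hg⟩
    refine ⟨N₁ * N₂, Subring.mul_mem _ hN₁ hN₂, T₁ * T₂, Subring.mul_mem _ hT₁ hT₂, ?_⟩
    filter_upwards [hf, hg] with u ⟨hT₁, hf⟩ ⟨hT₂, hg⟩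
    simp only [map_mul]
    exact ⟨mul_ne_zero hT₁ hT₂, by rw [Pi.mul_apply, hf, hg, div_mul_div_comm]⟩
  algebraMap_mem' c := ⟨single 0 (algebraMap ℝ (ExpSum ℝ) c), single_mem_withExponents M.zero_mem _,
    1, Subring.one_mem _, .of_forall fun u => by simp [eval_single]⟩

lemma eval₂_div_mem_fractionsAlong {N T : ExpSum₂} (hN : N ∈ withExponents (ExpSum ℝ) M)
    (hT : T ∈ withExponents (ExpSum ℝ) M) (hne : ∀ᶠ u in l, eval₂ u (ξ u) T ≠ 0) :
    (fun u => eval₂ u (ξ u) N / eval₂ u (ξ u) T) ∈ fractionsAlong l ξ M :=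
  ⟨N, hN, T, hT, hne.mono fun _ hu => ⟨hu, rfl⟩⟩

lemma evalCoeff_mem_fractionsAlong (b : ExpSum ℝ) :
    (fun u => evalCoeff u b) ∈ fractionsAlong l ξ M :=
  ⟨single 0 b, single_mem_withExponents M.zero_mem b, 1, Subring.one_mem _,
    .of_forall fun u => by simp [eval_single]⟩

lemma fractionsAlong_div_mem {f g : ℝ → ℝ} (hf : f ∈ fractionsAlong l ξ M)
    (hg : g ∈ fractionsAlong l ξ M) (hne : ∀ᶠ u in l, g u ≠ 0) : f / g ∈ fractionsAlong l ξ M := by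
  obtain ⟨N₁, hN₁, T₁, hT₁, hf⟩ := hf
  obtain ⟨N₂, hN₂, T₂, hT₂, hg⟩ := hg
  refine ⟨N₁ * T₂, Subring.mul_mem _ hN₁ hT₂, T₁ * N₂, Subring.mul_mem _ hT₁ hN₂, ?_⟩
  filter_upwards [hf, hg, hne] with u ⟨hT₁, hf⟩ ⟨_, hg⟩ hne
  simp only [map_mul]
  refine ⟨mul_ne_zero hT₁ fun h => hne (by rw [hg, h, zero_div]), ?_⟩
  rw [Pi.div_apply, hf, hg, div_div_div_eq]

variable {P : ExpSum₂} (hP : P ∈ withExponents (ExpSum ℝ) M)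
  (hsimple : ∀ᶠ u in l, eval₂ u (ξ u) (shiftedDeriv 0 P) ≠ 0)
  (hξ : ∀ᶠ u in l,
    HasDerivAt ξ (-eval₂ u (ξ u) (coeffDeriv P) / eval₂ u (ξ u) (shiftedDeriv 0 P)) u)

include hξ in
lemma hasEventualSign_of_mem_fractionsAlong [IsIntervalEnd l]
    (hdich : ∀ Q ∈ withExponents (ExpSum ℝ) M,
      (∀ᶠ u in l, eval₂ u (ξ u) Q = 0) ∨ ∀ᶠ u in l, eval₂ u (ξ u) Q ≠ 0)
    {f : ℝ → ℝ} (hf : f ∈ fractionsAlong l ξ M) : HasEventualSign l f := by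
  obtain ⟨N, hN, T, -, hf⟩ := hf
  suffices h : HasEventualSign l fun u => eval₂ u (ξ u) N / eval₂ u (ξ u) T from
    h.congr (hf.mono fun u hu => hu.2.symm)
  rcases hdich N hN with h | h
  · exact .of_eventually_eq_zero (h.mono fun u hu => by rw [hu, zero_div])
  · refine .of_continuousAt ?_ ?_
    · filter_upwards [hξ, hf] with u hξ hu
      exact (continuousAt_eval₂_comp N hξ.continuousAt).div
        (continuousAt_eval₂_comp T hξ.continuousAt) hu.1
    · filter_upwards [h, hf] with u hN hu using div_ne_zero hN hu.1

include hP hsimple hξ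

lemma exists_hasDerivAt_of_mem_fractionsAlong [IsIntervalEnd l] {f : ℝ → ℝ}
    (hf : f ∈ fractionsAlong l ξ M) :
    ∃ f' ∈ fractionsAlong l ξ M, ∀ᶠ u in l, HasDerivAt f (f' u) u := by
  obtain ⟨N, hN, T, hT, hf⟩ := hf
  have hD := shiftedDeriv_mem_withExponents hP 0
  refine ⟨_, eval₂_div_mem_fractionsAlong (N := implicitDeriv P N * T - N * implicitDeriv P T)
    (T := shiftedDeriv 0 P * T ^ 2) (Subring.sub_mem _
      (Subring.mul_mem _ (implicitDeriv_mem_withExponents hP hN) hT)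
      (Subring.mul_mem _ hN (implicitDeriv_mem_withExponents hP hT)))
    (Subring.mul_mem _ hD (Subring.pow_mem _ hT 2)) ?_, ?_⟩
  · filter_upwards [hsimple, hf] with u hsimple hu
    rw [map_mul, map_pow]
    exact mul_ne_zero hsimple (pow_ne_zero _ hu.1)
  · filter_upwards [hξ, hsimple, hf, eventually_eventually_nhds_of_eventually hf]
      with u hξ hsimple hu hf
    refine (((hasDerivAt_eval₂_root N hξ hsimple).div (hasDerivAt_eval₂_root T hξ hsimple)
      hu.1).congr_of_eventuallyEq (hf.mono fun w hw => hw.2)).congr_deriv ?_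
    simp only [map_mul, map_pow, map_sub]
    field_simp

lemma tame_of_eventually_eq_zero_or_ne_zero [IsIntervalEnd l]
    (hdich : ∀ Q ∈ withExponents (ExpSum ℝ) M,
      (∀ᶠ u in l, eval₂ u (ξ u) Q = 0) ∨ ∀ᶠ u in l, eval₂ u (ξ u) Q ≠ 0) : Tame l ξ := by
  have hardy : IsHardy l (fractionsAlong l ξ M) :=
    ⟨fun f hf => hasEventualSign_of_mem_fractionsAlong hξ hdich hf,
      fun f hf g hg hne => fractionsAlong_div_mem hf hg hne,
      fun f hf => exists_hasDerivAt_of_mem_fractionsAlong hP hsimple hξ hf⟩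
  have hξ' := eval₂_div_mem_fractionsAlong (Subring.neg_mem _ (coeffDeriv_mem_withExponents hP))
    (shiftedDeriv_mem_withExponents hP 0) hsimple
  simp only [map_neg] at hξ'
  refine ⟨⟨_, hξ, hardy.hasEventualSign _ hξ'⟩, fun Q => ?_⟩
  refine (hardy.hasEventualSign_sum_mul_exp hξ' hξ Q.coeff.support
    (h := fun β u => evalCoeff u (Q.coeff β)) fun β => evalCoeff_mem_fractionsAlong _).congr ?_
  exact .of_forall fun u => (eval_eq_sum _ _ _).symm

end Tameness

section Resolvability

variable {l : Filter ℝ} {P : ExpSum₂} {ι : Type*} {η : ι → ℝ → ℝ} {S : Set ι}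

lemma eventually_mem_gap_of_frequently [Finite ι] {ψ : ℝ → ℝ}
    (hsign : ∀ i, HasEventualSign l fun u => η i u - ψ u) (h : ∃ᶠ u in l, ψ u ∈ gap η S u) :
    ∀ᶠ u in l, ψ u ∈ gap η S u := by
  have (i : ι) : ∀ᶠ u in l, (i ∈ S → η i u < ψ u) ∧ (i ∉ S → ψ u < η i u) := by
    obtain ⟨σ, hσ⟩ := hsign i
    obtain ⟨w, hw, hσw⟩ := (h.and_eventually hσ).exists
    filter_upwards [hσ] with u hσu
    refine ⟨fun hi => ?_, fun hi => ?_⟩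
    · rw [← sub_neg, ← sign_eq_neg_one_iff, hσu, ← hσw, sign_eq_neg_one_iff, sub_neg]
      exact hw.1 i hi
    · rw [← sub_pos, ← sign_eq_one_iff, hσu, ← hσw, sign_eq_one_iff, sub_pos]
      exact hw.2 i hi
  exact (eventually_all.mpr this).mono fun u hu => ⟨fun i => (hu i).1, fun i => (hu i).2⟩

/-- Near the end `l`, the zero set of `P` is the union of the graphs of finitely many tame
functions. -/
def Resolvable (l : Filter ℝ) (P : ExpSum₂) : Prop :=
  ∃ (ι : Type) (_ : Finite ι) (η : ι → ℝ → ℝ), Resolves l P η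

variable [IsIntervalEnd l]

lemma Resolvable.of_card_support_le_one (hP : P ≠ 0) (hcard : P.coeff.support.card ≤ 1) :
    Resolvable l P := by
  refine ⟨Empty, inferInstance, Empty.elim, fun i => i.elim, ?_⟩
  filter_upwards [eventually_nondegenerate l P] with u hu v
  refine iff_of_false (fun h0 => ?_) fun ⟨i, _⟩ => i.elim
  have := hu.card_roots_lt hP (Z := {v}) (by simpa using h0)
  rw [Finset.card_singleton] at this
  lia

namespace Resolves

variable {γ : ℝ} {ξ : ℝ → ℝ} [Finite ι] (hη : Resolves l (shiftedDeriv γ P) η)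
  (hD : shiftedDeriv γ P ≠ 0)
  (hgap : ∀ᶠ u in l, ξ u ∈ gap η S u) (hroot : ∀ᶠ u in l, eval₂ u (ξ u) P = 0)
include hη hD

include hgap hroot in
lemma tame_of_frequently_root {T : ExpSum₂} (hT : Resolvable l T)
    (hξT : ∃ᶠ u in l, eval₂ u (ξ u) T = 0) : Tame l ξ := by
  obtain ⟨κ, _, ζ, hζ⟩ := hT
  obtain ⟨k, hk⟩ : ∃ k, ∃ᶠ u in l, ζ k u = ξ u :=
    frequently_exists.mp <| (hξT.and_eventually hζ.root_iff).mono fun u hu => (hu.2 _).mp hu.1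
  have ζ_root : ∀ᶠ u in l, eval₂ u (ζ k u) P = 0 :=
    ((hζ.tame k).hasEventualSign P).eventually_eq_zero <|
      (hk.and_eventually hroot).mono fun u hu => hu.1 ▸ hu.2
  have hsign (i : ι) : HasEventualSign l fun u => η i u - ζ k u := by
    have hP : P ≠ 0 := fun h => hD (h ▸ shiftedDeriv_zero γ)
    refine (hη.tame i).hasEventualSign_sub (hζ.tame k) (mul_ne_zero hP hD) ?_ ?_
    · exact (hη.eventually_root i).mono fun u hu => by rw [map_mul, hu, mul_zero]
    · exact ζ_root.mono fun u hu => by rw [map_mul, hu, zero_mul]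
  have ζ_mem_gap := eventually_mem_gap_of_frequently hsign <|
    (hk.and_eventually hgap).mono fun u hu => hu.1 ▸ hu.2
  refine (hζ.tame k).congr ?_
  filter_upwards [hη.eventually_ne_zero_of_mem_gap S, ζ_mem_gap, hgap, ζ_root, hroot]
    with u hne hζ hξ hζP hξP using root_unique_of_mem_gap hne hζ hξ hζP hξP

include hgap hroot in
lemma tame_of_mem_gap {M : AddSubmonoid ℝ}
    (hM : ∀ T ∈ withExponents (ExpSum ℝ) M, T ≠ 0 → Resolvable l T) {δ : ℝ}
    (hP : P ∈ withExponents (ExpSum ℝ) (M ⊔ .closure {δ})) : Tame l ξ := by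
  by_cases hT : ∀ T ∈ withExponents (ExpSum ℝ) M, T ≠ 0 → ∀ᶠ u in l, eval₂ u (ξ u) T ≠ 0
  · have hdiff := hη.eventually_differentiableAt S hgap hroot
    have hsimple : ∀ᶠ u in l, eval₂ u (ξ u) (shiftedDeriv 0 P) ≠ 0 := by
      filter_upwards [hη.eventually_ne_zero_of_mem_gap S, hgap, hroot] with u hne hgap hroot
      simpa [shiftedDeriv_eq_sub_smul P γ, hroot] using hne _ hgap
    refine tame_of_eventually_eq_zero_or_ne_zero hP hsimple ?_ fun Q hQ =>
      eventually_eq_zero_or_ne_zero_of_mem_withExponents_sup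
        (hdiff.mono fun u hu => hu.continuousAt) hT hP (fun h => hD (h ▸ shiftedDeriv_zero γ))
        hroot hQ
    filter_upwards [hdiff, eventually_eventually_nhds_of_eventually hroot, hsimple]
      with u hdiff hroot hsimple using hasDerivAt_root hdiff hroot hsimple
  · push Not at hT
    obtain ⟨T, hTM, hT0, hξT⟩ := hT
    exact hη.tame_of_frequently_root hD hgap hroot (hM T hTM hT0) hξT

end Resolves

lemma Resolvable.of_shiftedDeriv {ι : Type} [Finite ι] {η : ι → ℝ → ℝ} {γ : ℝ}
    (hη : Resolves l (shiftedDeriv γ P) η) (hD : shiftedDeriv γ P ≠ 0)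
    (htame : ∀ (S : Set ι) (ξ : ℝ → ℝ), (∀ᶠ u in l, ξ u ∈ gap η S u) →
      (∀ᶠ u in l, eval₂ u (ξ u) P = 0) → Tame l ξ) : Resolvable l P := by
  choose ξ hξ using fun S : {S : Set ι // ∀ᶠ u in l, ∃ v ∈ gap η S u, eval₂ u v P = 0} =>
    S.2.choice
  have ξ_tame (S) : Tame l (ξ S) :=
    htame S (ξ S) ((hξ S).mono fun u hu => hu.1) ((hξ S).mono fun u hu => hu.2)
  have no_root (S : Set ι) : ∀ᶠ u in l, (¬ ∀ᶠ u in l, ∃ v ∈ gap η S u, eval₂ u v P = 0) →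
      ∀ v ∈ gap η S u, eval₂ u v P ≠ 0 :=
    (hη.exists_root_mem_gap_or_forall_ne S hD).elim (fun h => .of_forall fun u hS => absurd h hS)
      fun h => h.mono fun u hu _ => hu
  refine ⟨_, inferInstance, _, Resolves.of_forall_root (η := Sum.elim η ξ)
    (Sum.forall.mpr ⟨hη.tame, ξ_tame⟩) ?_⟩
  filter_upwards [eventually_all.mpr hξ, eventually_all.mpr no_root,
    eventually_all.mpr hη.eventually_ne_zero_of_mem_gap] with u hξ no_root hne v hv
  by_contra! hno
  have hv_gap : v ∈ gap η {i | η i u < v} u :=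
    ⟨fun i hi => hi, fun i hi => lt_of_le_of_ne (not_lt.mp hi) (hno (.inl i)).symm⟩
  by_cases hS : ∀ᶠ w in l, ∃ x ∈ gap η {i | η i u < v} w, eval₂ w x P = 0
  · exact hno (.inr ⟨_, hS⟩) (root_unique_of_mem_gap (hne _) (hξ _).1 hv_gap (hξ _).2 hv)
  · exact no_root _ hS v hv_gap hv

lemma resolvable_of_mem_withExponents_sup {M : AddSubmonoid ℝ}
    (hM : ∀ T ∈ withExponents (ExpSum ℝ) M, T ≠ 0 → Resolvable l T) {δ : ℝ}
    (hPM : P ∈ withExponents (ExpSum ℝ) (M ⊔ .closure {δ})) (hP : P ≠ 0) : Resolvable l P := by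
  induction hn : P.coeff.support.card using Nat.strong_induction_on generalizing P with
  | _ n ih =>
    obtain ⟨γ, hγ⟩ : P.coeff.support.Nonempty := by simpa [Finset.nonempty_iff_ne_empty] using hP
    have hcard : (shiftedDeriv γ P).coeff.support.card + 1 = n := by
      rw [support_shiftedDeriv, Finset.card_erase_add_one hγ, hn]
    rcases eq_or_ne (shiftedDeriv γ P) 0 with hD | hD
    · refine .of_card_support_le_one hP (hn.trans_le ?_)
      simp [← hcard, hD]
    · obtain ⟨ι, _, η, hη⟩ := ih _ (by lia) (shiftedDeriv_mem_withExponents hPM γ) hD rfl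
      exact .of_shiftedDeriv hη hD fun S ξ hgap hroot =>
        hη.tame_of_mem_gap hD hgap hroot hM hPM

variable (l) in
lemma resolvable (hP : P ≠ 0) : Resolvable l P := by
  suffices H : ∀ s : Finset ℝ, ∀ T ∈ withExponents (ExpSum ℝ) (.closure (s : Set ℝ)), T ≠ 0 →
      Resolvable l T from
    H P.coeff.support P (fun β hβ => AddSubmonoid.subset_closure hβ) hP
  intro s
  induction s using Finset.induction_on with
  | empty =>
    intro T hT hT0
    refine .of_card_support_le_one hT0 (Finset.card_le_one_iff_subset_singleton.mpr ⟨0, ?_⟩)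
    simpa [mem_withExponents, Finset.subset_iff] using hT
  | insert δ s _ ih =>
    intro T hT hT0
    rw [Finset.coe_insert, insert_eq, AddSubmonoid.closure_union, sup_comm] at hT
    exact resolvable_of_mem_withExponents_sup ih hT hT0

end Resolvability

end ExpSum

/-- One of the relations `f < g`, `f = g` and `g < f` holds throughout `I`. -/
def UniformlyComparable (I : Set ℝ) (f g : ℝ → ℝ) : Prop :=
  (∀ u ∈ I, f u < g u) ∨ (∀ u ∈ I, f u = g u) ∨ ∀ u ∈ I, g u < f u

namespace UniformlyComparable

variable {I J : Set ℝ} {f g : ℝ → ℝ} {u w : ℝ}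

lemma mono (h : UniformlyComparable J f g) (hIJ : I ⊆ J) : UniformlyComparable I f g :=
  h.imp (fun h u hu => h u (hIJ hu)) <|
    Or.imp (fun h u hu => h u (hIJ hu)) fun h u hu => h u (hIJ hu)

lemma lt_of_lt (h : UniformlyComparable I f g) (hu : u ∈ I) (hfg : f u < g u) (hw : w ∈ I) :
    f w < g w := by
  rcases h with h | h | h
  · exact h w hw
  · exact absurd (h u hu) hfg.ne
  · exact absurd (h u hu) hfg.not_gt

lemma eq_of_eq (h : UniformlyComparable I f g) (hu : u ∈ I) (hfg : f u = g u) (hw : w ∈ I) :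
    f w = g w := by
  rcases h with h | h | h
  · exact absurd hfg (h u hu).ne
  · exact h w hw
  · exact absurd hfg (h u hu).ne'

end UniformlyComparable

lemma HasEventualSign.eventually_uniformlyComparable {l : Filter ℝ} {f g : ℝ → ℝ}
    (h : HasEventualSign l fun u => f u - g u) :
    ∀ᶠ I in l.smallSets, UniformlyComparable I f g := by
  rcases h.lt_or_eq_or_gt with h | h | h
  · exact (eventually_smallSets_forall.mpr h).mono fun I hI => .inl hI
  · exact (eventually_smallSets_forall.mpr h).mono fun I hI => .inr (.inl hI)
  · exact (eventually_smallSets_forall.mpr h).mono fun I hI => .inr (.inr hI)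

lemma exists_sign_eq_iff_eq_zero_and_pos {R : Type*} [CommRing R] [Algebra ℝ R] (𝒬 : Finset R)
    (ρ : R → SignType) :
    ∃ (f : R) (𝒢 : Finset R), ∀ φ : R →ₐ[ℝ] ℝ,
      (∀ Q ∈ 𝒬, SignType.sign (φ Q) = ρ Q) ↔ φ f = 0 ∧ ∀ g ∈ 𝒢, 0 < φ g := by
  classical
  induction 𝒬 using Finset.induction_on with
  | empty => exact ⟨0, ∅, by simp⟩
  | insert Q 𝒬 _ ih =>
    obtain ⟨f, 𝒢, h⟩ := ih
    rcases (ρ Q).trichotomy with hρ | hρ | hρ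
    · refine ⟨f, insert (-Q) 𝒢, fun φ => ?_⟩
      simp only [Finset.forall_mem_insert, h, hρ, sign_eq_neg_one_iff, map_neg, neg_pos]
      tauto
    · refine ⟨f ^ 2 + Q ^ 2, 𝒢, fun φ => ?_⟩
      simp only [Finset.forall_mem_insert, h, hρ, sign_eq_zero_iff, map_add, map_pow,
        add_eq_zero_iff_of_nonneg (sq_nonneg (φ f)) (sq_nonneg (φ Q)), sq_eq_zero_iff]
      tauto
    · refine ⟨f, insert Q 𝒢, fun φ => ?_⟩
      simp only [Finset.forall_mem_insert, h, hρ, sign_eq_one_iff]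
      tauto

namespace ExpSum
open AddMonoidAlgebra

/-- A continuous monotonic function on `I` whose graph is cut out, over `I`, by one equation and
finitely many strict inequalities between exponential sums. -/
structure IsArc (I : Set ℝ) (ξ : ℝ → ℝ) : Prop where
  continuousOn : ContinuousOn ξ I
  monotoneOn_or_antitoneOn : MonotoneOn ξ I ∨ AntitoneOn ξ I
  definable : ∃ (f : ExpSum₂) (𝒢 : Finset ExpSum₂), ∀ u ∈ I, ∀ v,
    v = ξ u ↔ eval₂ u v f = 0 ∧ ∀ g ∈ 𝒢, 0 < eval₂ u v g

lemma IsArc.mono {I J : Set ℝ} {ξ : ℝ → ℝ} (h : IsArc J ξ) (hIJ : I ⊆ J) : IsArc I ξ where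
  continuousOn := h.continuousOn.mono hIJ
  monotoneOn_or_antitoneOn := h.monotoneOn_or_antitoneOn.imp (·.mono hIJ) (·.mono hIJ)
  definable := by
    obtain ⟨f, 𝒢, h⟩ := h.definable
    exact ⟨f, 𝒢, fun u hu => h u (hIJ hu)⟩

section Local

variable {l : Filter ℝ} [IsIntervalEnd l] {ξ : ℝ → ℝ} {P : ExpSum₂}

lemma Tame.exists_mem_definable (hξ : Tame l ξ) (hP : P ≠ 0)
    (hroot : ∀ᶠ u in l, eval₂ u (ξ u) P = 0) :
    ∃ (f : ExpSum₂) (𝒢 : Finset ExpSum₂), ∀ᶠ u in l, ∀ v,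
      v = ξ u ↔ eval₂ u v f = 0 ∧ ∀ g ∈ 𝒢, 0 < eval₂ u v g := by
  classical
  obtain ⟨𝒬, h𝒬⟩ := exists_finset_sign_separating hP
  choose ρ hρ using hξ.hasEventualSign
  obtain ⟨f, 𝒢, h⟩ := exists_sign_eq_iff_eq_zero_and_pos (insert P 𝒬) ρ
  refine ⟨f, 𝒢, ?_⟩
  filter_upwards [hroot, eventually_nondegenerate l P,
    (Finset.eventually_all (insert P 𝒬)).mpr fun Q _ => hρ Q] with u hroot hu hsign v
  rw [← h]
  refine ⟨fun hv => hv ▸ hsign, fun hv => h𝒬 _ hu _ _ ?_ hroot fun Q hQ => ?_⟩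
  · rw [← sign_eq_zero_iff, hv P (Finset.mem_insert_self ..), ← hsign P (Finset.mem_insert_self ..),
      hroot, sign_zero]
  · have hQ := Finset.mem_insert_of_mem (b := P) hQ
    exact (hv Q hQ).trans (hsign Q hQ).symm

lemma Tame.eventually_isArc (hξ : Tame l ξ) (hP : P ≠ 0)
    (hroot : ∀ᶠ u in l, eval₂ u (ξ u) P = 0) : ∀ᶠ I in l.smallSets, IsArc I ξ := by
  obtain ⟨ξ', hξ', σ, hσ⟩ := hξ.exists_hasDerivAt
  obtain ⟨f, 𝒢, hdef⟩ := hξ.exists_mem_definable hP hroot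
  obtain ⟨I, hI, -, hconn, h⟩ :=
    exists_isOpen_ordConnected_of_eventually (hξ'.and (hσ.and hdef))
  refine (eventually_smallSets' fun _ _ hJ h => h.mono hJ).mpr ⟨I, hI, ?_, ?_, f, 𝒢, ?_⟩
  · exact fun u hu => (h u hu).1.continuousAt.continuousWithinAt
  · exact monotoneOn_or_antitoneOn_of_sign_deriv_eq hconn (fun u hu => (h u hu).1)
      fun u hu => (h u hu).2.1
  · exact fun u hu => (h u hu).2.2

end Local

/-- Over `I`, the zero set of each `P n` is the union of the graphs of the arcs `ξ n i`, and all
these arcs are pairwise comparable. -/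
structure IsStratification {κ : Type*} {ι : κ → Type*} (P : κ → ExpSum₂) (I : Set ℝ)
    (ξ : (n : κ) → ι n → ℝ → ℝ) : Prop where
  isArc (n : κ) (i : ι n) : IsArc I (ξ n i)
  comparable (n m : κ) (i : ι n) (j : ι m) : UniformlyComparable I (ξ n i) (ξ m j)
  root_iff (n : κ) : ∀ u ∈ I, ∀ v, eval₂ u v (P n) = 0 ↔ ∃ i, ξ n i u = v
  nondegenerate (n : κ) : ∀ u ∈ I, Nondegenerate (evalCoeff u) (P n)

section Stratification

variable {κ : Type*} (P : κ → ExpSum₂)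

/-- Some family of arcs stratifies `P` over `I`. -/
def Stratifiable (I : Set ℝ) : Prop :=
  ∃ (ι : κ → Type) (ξ : (n : κ) → ι n → ℝ → ℝ), IsStratification P I ξ

lemma antitone_stratifiable : Antitone (Stratifiable P) := by
  rintro I J hIJ ⟨ι, ξ, h⟩
  exact ⟨ι, ξ, fun n i => (h.isArc n i).mono hIJ, fun n m i j => (h.comparable n m i j).mono hIJ,
    fun n u hu => h.root_iff n u (hIJ hu), fun n u hu => h.nondegenerate n u (hIJ hu)⟩

variable {P}

lemma eventually_stratifiable [Finite κ] (hP : ∀ n, P n ≠ 0) (l : Filter ℝ) [IsIntervalEnd l] :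
    ∀ᶠ I in l.smallSets, Stratifiable P I := by
  choose ι _ ξ hξ using fun n => resolvable l (hP n)
  have comparable (n m : κ) (i : ι n) (j : ι m) :
      ∀ᶠ I in l.smallSets, UniformlyComparable I (ξ n i) (ξ m j) := by
    refine HasEventualSign.eventually_uniformlyComparable <|
      ((hξ n).tame i).hasEventualSign_sub ((hξ m).tame j) (mul_ne_zero (hP n) (hP m)) ?_ ?_
    · exact ((hξ n).eventually_root i).mono fun u hu => by rw [map_mul, hu, zero_mul]
    · exact ((hξ m).eventually_root j).mono fun u hu => by rw [map_mul, hu, mul_zero]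
  filter_upwards [
    eventually_all.mpr fun n => eventually_all.mpr fun i =>
      ((hξ n).tame i).eventually_isArc (hP n) ((hξ n).eventually_root i),
    eventually_all.mpr fun n => eventually_all.mpr fun m => eventually_all.mpr fun i =>
      eventually_all.mpr fun j => comparable n m i j,
    eventually_all.mpr fun n => eventually_smallSets_forall.mpr (hξ n).root_iff,
    eventually_all.mpr fun n => eventually_smallSets_forall.mpr (eventually_nondegenerate l (P n))]
    with I hArc hcomp hroot hnd using ⟨ι, ξ, hArc, hcomp, hroot, hnd⟩

end Stratification
end ExpSum

section Compactness

variable {I : Set ℝ} {e u : ℝ}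

lemma subset_Iio_of_lt (hI : OrdConnected I) (he : e ∉ I) (hu : u ∈ I) (hue : u < e) : I ⊆ Iio e :=
  fun _ hw => not_le.mp fun hew => he (hI.out hu hw ⟨hue.le, hew⟩)

lemma subset_Ioi_of_lt (hI : OrdConnected I) (he : e ∉ I) (hu : u ∈ I) (heu : e < u) : I ⊆ Ioi e :=
  fun _ hw => not_le.mp fun hwe => he (hI.out hw hu ⟨hwe, heu.le⟩)

/-- All intervals that meet `s` and avoid some finite set have the property `G`. -/
def FinitelyControlled (G : Set ℝ → Prop) (s : Set ℝ) : Prop :=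
  ∃ E : Finset ℝ, ∀ I : Set ℝ, OrdConnected I → (∀ e ∈ E, e ∉ I) → (I ∩ s).Nonempty → G I

namespace FinitelyControlled

variable {G : Set ℝ → Prop} {s t : Set ℝ}

lemma mono (hst : s ⊆ t) : FinitelyControlled G t → FinitelyControlled G s :=
  fun ⟨E, hE⟩ =>
    ⟨E, fun I hI hdisj hne => hE I hI hdisj (hne.mono (inter_subset_inter_right I hst))⟩

lemma union : FinitelyControlled G s → FinitelyControlled G t → FinitelyControlled G (s ∪ t) := by
  classical
  rintro ⟨E, hE⟩ ⟨F, hF⟩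
  refine ⟨E ∪ F, fun I hI hdisj hne => ?_⟩
  rw [Finset.forall_mem_union] at hdisj
  rw [inter_union_distrib_left, union_nonempty] at hne
  exact hne.elim (hE I hI hdisj.1) (hF I hI hdisj.2)

lemma Iio_of_antitone (hG : Antitone G) {c : ℝ} (hc : G (Iio c)) : FinitelyControlled G (Iio c) :=
  ⟨{c}, fun _ hI hdisj ⟨_, hu, huc⟩ =>
    hG (subset_Iio_of_lt hI (hdisj c (Finset.mem_singleton_self c)) hu huc) hc⟩

lemma Ioi_of_antitone (hG : Antitone G) {c : ℝ} (hc : G (Ioi c)) : FinitelyControlled G (Ioi c) :=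
  ⟨{c}, fun _ hI hdisj ⟨_, hu, hcu⟩ =>
    hG (subset_Ioi_of_lt hI (hdisj c (Finset.mem_singleton_self c)) hu hcu) hc⟩

lemma Ioo_of_antitone (hG : Antitone G) {k x r : ℝ} (hkx : G (Ioo k x)) (hxr : G (Ioo x r)) :
    FinitelyControlled G (Ioo k r) := by
  refine ⟨{k, x, r}, ?_⟩
  simp only [Finset.forall_mem_insert, Finset.mem_singleton, forall_eq]
  rintro I hI ⟨hkI, hxI, hrI⟩ ⟨u, hu, hku, hur⟩
  rcases lt_trichotomy u x with hux | rfl | hxu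
  · exact hG (subset_inter (subset_Ioi_of_lt hI hkI hu hku) (subset_Iio_of_lt hI hxI hu hux)) hkx
  · exact absurd hu hxI
  · exact hG (subset_inter (subset_Ioi_of_lt hI hxI hu hxu) (subset_Iio_of_lt hI hrI hu hur)) hxr

end FinitelyControlled

lemma exists_finset_forall_ordConnected {G : Set ℝ → Prop} (hG : Antitone G)
    (hloc : ∀ (l : Filter ℝ) [IsIntervalEnd l], ∀ᶠ I in l.smallSets, G I) :
    ∃ E : Finset ℝ, ∀ I : Set ℝ, OrdConnected I → (∀ e ∈ E, e ∉ I) → G I := by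
  obtain ⟨c, -, hc⟩ := (hloc atBot).exists_mem_basis_of_smallSets atBot_basis_Iio
  obtain ⟨d, -, hd⟩ := (hloc atTop).exists_mem_basis_of_smallSets atTop_basis_Ioi
  have controlled_Icc : FinitelyControlled G (Icc c d) := by
    refine isCompact_Icc.induction_on ⟨∅, by simp⟩ (fun _ _ => .mono) (fun _ _ => .union)
      fun x _ => ?_
    obtain ⟨k, hk, hkx⟩ := (hloc (𝓝[<] x)).exists_mem_basis_of_smallSets (nhdsLT_basis x)
    obtain ⟨r, hr, hxr⟩ := (hloc (𝓝[>] x)).exists_mem_basis_of_smallSets (nhdsGT_basis x)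
    exact ⟨Ioo k r, mem_nhdsWithin_of_mem_nhds (Ioo_mem_nhds hk hr), .Ioo_of_antitone hG hkx hxr⟩
  obtain ⟨E, hE⟩ := ((FinitelyControlled.Iio_of_antitone hG hc).union controlled_Icc).union
    (.Ioi_of_antitone hG hd)
  refine ⟨E, fun I hI hdisj => ?_⟩
  rcases I.eq_empty_or_nonempty with rfl | ⟨u, hu⟩
  · exact hG (empty_subset _) hc
  · refine hE I hI hdisj ⟨u, hu, ?_⟩
    simp only [mem_union, mem_Iio, mem_Icc, mem_Ioi]
    grind

end Compactness

lemma exists_strictMonoOn_image_Icc_eq {α : Type*} [LinearOrder α] (Z : Finset α) {b : α}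
    (hb : ∀ v ∈ Z, b < v) :
    ∃ z : ℕ → α, z 0 = b ∧ StrictMonoOn z (Iic Z.card) ∧ z '' Icc 1 Z.card = Z := by
  induction Z using Finset.induction_on_max with
  | empty => exact ⟨fun _ => b, rfl, by simp [StrictMonoOn], by simp⟩
  | insert v Z hZ ih =>
    obtain ⟨z, hz0, hz, himage⟩ := ih fun w hw => hb w (Finset.mem_insert_of_mem hw)
    rw [Finset.card_insert_of_notMem fun hv => (hZ v hv).false]
    have update_of_le {k : ℕ} (hk : k ≤ Z.card) : Function.update z (Z.card + 1) v k = z k :=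
      Function.update_of_ne (by lia) ..
    refine ⟨Function.update z (Z.card + 1) v, by rw [update_of_le (Nat.zero_le _), hz0], ?_, ?_⟩
    · intro i hi j hj hij
      have hi' : i ≤ Z.card := by simp only [mem_Iic] at hi hj; lia
      rw [update_of_le hi']
      rcases (mem_Iic.mp hj).eq_or_lt with rfl | hj
      · rw [Function.update_self]
        rcases i.eq_zero_or_pos with rfl | hi0
        · exact hz0 ▸ hb v (Finset.mem_insert_self v Z)
        · exact hZ _ (himage.subset ⟨i, ⟨hi0, hi'⟩, rfl⟩)
      · rw [update_of_le (Nat.lt_succ_iff.mp hj)]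
        exact hz hi' (Nat.lt_succ_iff.mp hj) hij
    · rw [← insert_Icc_right_eq_Icc_add_one (by lia), image_insert_eq, Function.update_self,
        Finset.coe_insert, ← himage]
      exact congrArg _ (image_congr fun k hk => update_of_le hk.2)

section Strips

variable {γ : ℕ → ℝ} {L p : ℕ}

lemma mem_vstrip {x : ℝ} : x ∈ vstrip γ L p ↔ γ p < x ∧ (p ≠ L → x < γ (p + 1)) := by
  unfold vstrip
  split_ifs with h <;> simp [h]

lemma ordConnected_vstrip : OrdConnected (vstrip γ L p) := by
  unfold vstrip
  split_ifs
  exacts [ordConnected_Ioi, ordConnected_Ioo]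

variable (hγ : StrictMonoOn γ (Iic L)) (hp : p ≤ L)
include hγ hp

lemma nonempty_vstrip : (vstrip γ L p).Nonempty := by
  unfold vstrip
  split_ifs with h
  · exact nonempty_Ioi
  · exact nonempty_Ioo.mpr (hγ hp (by simp only [mem_Iic]; lia) p.lt_succ_self)

lemma vstrip_subset_Ioi : vstrip γ L p ⊆ Ioi (γ 0) := fun _ hx =>
  (hγ.monotoneOn (Nat.zero_le L) hp (Nat.zero_le p)).trans_lt (mem_vstrip.mp hx).1

lemma notMem_vstrip {k : ℕ} (hk : k ≤ L) : γ k ∉ vstrip γ L p := by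
  rw [mem_vstrip]
  rintro ⟨hpk, hkp⟩
  have hpk : p < k := (hγ.lt_iff_lt hp hk).mp hpk
  exact (hkp (by lia)).not_ge (hγ.monotoneOn (by simp only [mem_Iic]; lia) hk hpk)

end Strips

namespace ExpSum
open AddMonoidAlgebra

section Conversion

lemma exists_evalCoeff_eq {b : ℝ → ℝ} (hb : IsGenPoly1 b) :
    ∃ B : ExpSum ℝ, ∀ u, evalCoeff u B = b (Real.exp u) := by
  obtain ⟨m, c, α, -, -, h⟩ := hb
  refine ⟨∑ j, single (α j) (c j), fun u => ?_⟩
  rw [h _ (Real.exp_pos u), map_sum]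
  refine Finset.sum_congr rfl fun j _ => ?_
  rw [eval_single, ← Real.exp_mul, mul_comm u, AlgHom.id_apply]

lemma exists_eval₂_eq_sum {κ : Type*} [Fintype κ] {β : κ → ℝ} (hβ : Function.Injective β)
    {b : κ → ℝ → ℝ} (hb : ∀ i, IsGenPoly1 (b i)) (hb0 : ∀ i, ∃ x, 0 < x ∧ b i x ≠ 0) :
    ∃ P : ExpSum₂, P.coeff.support.card = Fintype.card κ ∧
      ∀ u v, eval₂ u v P = ∑ i, b i (Real.exp u) * Real.exp v ^ β i := by
  choose B hB using fun i => exists_evalCoeff_eq (hb i)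
  have hB0 (i : κ) : B i ≠ 0 := fun h => by
    obtain ⟨x, hx, hne⟩ := hb0 i
    rw [← Real.exp_log hx, ← hB, h, map_zero] at hne
    exact hne rfl
  let e : κ ↪ ℝ := ⟨β, hβ⟩
  have hsupp : (Finsupp.embDomain e (Finsupp.equivFunOnFinite.symm B)).support =
      Finset.univ.map e := by
    ext t
    simp [Finsupp.support_embDomain, hB0]
  refine ⟨ofCoeff (Finsupp.embDomain e (Finsupp.equivFunOnFinite.symm B)), ?_, fun u v => ?_⟩
  · rw [coeff_ofCoeff, hsupp, Finset.card_map, Finset.card_univ]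
  · rw [eval_eq_sum, coeff_ofCoeff, hsupp, Finset.sum_map]
    refine Finset.sum_congr rfl fun i _ => ?_
    rw [Finsupp.embDomain_apply_self, Finsupp.equivFunOnFinite_symm_apply_apply, hB, ← Real.exp_mul,
      mul_comm v]
    rfl

lemma isGenPoly2_eval₂_log (P : ExpSum₂) :
    IsGenPoly2 fun x y => eval₂ (Real.log x) (Real.log y) P := by
  let T : Finset (Σ _ : ℝ, ℝ) := P.coeff.support.sigma fun β => (P.coeff β).coeff.support
  let e := T.equivFin.symm
  refine ⟨T.card, fun k => (P.coeff (e k).1.1).coeff (e k).1.2,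
    fun k => ((e k).1.2, (e k).1.1), fun k => ?_, fun k k' h => ?_, fun x y hx hy => ?_⟩
  · exact Finsupp.mem_support_iff.mp (Finset.mem_sigma.mp (e k).2).2
  · exact e.injective <| Subtype.ext <|
      Sigma.ext (congrArg Prod.snd h) (heq_of_eq (congrArg Prod.fst h))
  · let term (t : Σ _ : ℝ, ℝ) : ℝ := (P.coeff t.1).coeff t.2 * x ^ t.2 * y ^ t.1
    calc eval₂ (Real.log x) (Real.log y) P
      _ = ∑ t ∈ T, term t := by
        rw [eval_eq_sum, Finset.sum_sigma]
        refine Finset.sum_congr rfl fun β _ => ?_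
        rw [eval_eq_sum, Finset.sum_mul]
        refine Finset.sum_congr rfl fun α _ => ?_
        simp only [term, Real.rpow_def_of_pos hx, Real.rpow_def_of_pos hy, mul_comm,
          AlgHom.id_apply]
      _ = ∑ k, term (e k) := by rw [← Finset.sum_coe_sort, ← e.sum_comp]

lemma isGSA2_setOf_eval₂_log (f : ExpSum₂) (𝒢 : Finset ExpSum₂) :
    IsGSA2 {q : ℝ × ℝ | 0 < q.1 ∧ 0 < q.2 ∧ eval₂ (Real.log q.1) (Real.log q.2) f = 0 ∧
      ∀ g ∈ 𝒢, 0 < eval₂ (Real.log q.1) (Real.log q.2) g} := by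
  refine ⟨1, fun _ => _, fun _ => ?_, (iUnion_const _).symm⟩
  refine ⟨_, 𝒢.card, fun k x y => eval₂ (Real.log x) (Real.log y) (𝒢.equivFin.symm k).1,
    isGenPoly2_eval₂_log f, fun k => isGenPoly2_eval₂_log _, ?_⟩
  simp only [𝒢.equivFin.symm.forall_congr_left, Equiv.symm_symm, Equiv.symm_apply_apply,
    Subtype.forall]

lemma exists_finset_forall_pos_iff_mem_vstrip (γ : ℕ → ℝ) (L p : ℕ) :
    ∃ 𝒱 : Finset ExpSum₂, ∀ u v, Real.exp u ∈ vstrip γ L p ↔ ∀ g ∈ 𝒱, 0 < eval₂ u v g := by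
  classical
  let expSub (c : ℝ) : ExpSum₂ := single 0 (single 1 1 - single 0 c)
  have eval₂_expSub (c u v : ℝ) : eval₂ u v (expSub c) = Real.exp u - c := by
    simp only [expSub]
    rw [eval_single, map_sub, eval_single, eval_single]
    simp
  by_cases h : p = L
  · exact ⟨{expSub (γ p)}, fun u v => by simp [mem_vstrip, h, eval₂_expSub]⟩
  · refine ⟨{expSub (γ p), -expSub (γ (p + 1))}, fun u v => ?_⟩
    simp [mem_vstrip, h, eval₂_expSub]

end Conversion
end ExpSum

/-- A branch over `V`: a positive, continuous, monotonic, generalized semialgebraic function. -/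
structure IsBranch (V : Set ℝ) (ξ : ℝ → ℝ) : Prop where
  continuousOn : ContinuousOn ξ V
  monotoneOn_or_antitoneOn : MonotoneOn ξ V ∨ AntitoneOn ξ V
  isGSA2_graph : IsGSA2 {q : ℝ × ℝ | q.1 ∈ V ∧ q.2 = ξ q.1}
  pos : ∀ x ∈ V, 0 < ξ x

/-- A cylindrical decomposition over `V` of the zero sets of the functions `a n`: the zero set of
`a n` consists of the graphs of `s n` branches `ξ n 1 < ⋯ < ξ n (s n)`, and the branches of all
the `a n` are pairwise comparable. Branches are numbered from `1`; the values of `ξ n` outside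
`1, …, s n` are meaningless. -/
structure IsCylindrical {κ : Type*} (a : κ → ℝ → ℝ → ℝ) (V : Set ℝ) (s : κ → ℕ)
    (ξ : κ → ℕ → ℝ → ℝ) : Prop where
  isBranch (n : κ) : ∀ j ∈ Icc 1 (s n), IsBranch V (ξ n j)
  strictMonoOn (n : κ) : ∀ x ∈ V, StrictMonoOn (fun j => ξ n j x) (Icc 1 (s n))
  zero_iff (n : κ) : ∀ x ∈ V, ∀ y, 0 < y → (a n x y = 0 ↔ ∃ j ∈ Icc 1 (s n), y = ξ n j x)
  comparable (n m : κ) : ∀ i ∈ Icc 1 (s n), ∀ j ∈ Icc 1 (s m),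
    UniformlyComparable V (ξ n i) (ξ m j)

section LogCoordinates

variable {V : Set ℝ} {f g : ℝ → ℝ} (hV : V ⊆ Ioi 0)
include hV

lemma mapsTo_log_preimage_exp : MapsTo Real.log V (Real.exp ⁻¹' V) := fun x hx => by
  rwa [mem_preimage, Real.exp_log (hV hx)]

lemma UniformlyComparable.exp_comp_log (h : UniformlyComparable (Real.exp ⁻¹' V) f g) :
    UniformlyComparable V (fun x => Real.exp (f (Real.log x)))
      fun x => Real.exp (g (Real.log x)) := by
  have hlog := mapsTo_log_preimage_exp hV
  exact h.imp (fun h x hx => Real.exp_lt_exp.mpr (h _ (hlog hx))) <|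
    Or.imp (fun h x hx => congrArg Real.exp (h _ (hlog hx)))
      fun h x hx => Real.exp_lt_exp.mpr (h _ (hlog hx))

end LogCoordinates

namespace ExpSum

section Branches

variable {V : Set ℝ} (hV : V ⊆ Ioi 0)
  (hdef : ∃ 𝒱 : Finset ExpSum₂, ∀ u v, Real.exp u ∈ V ↔ ∀ g ∈ 𝒱, 0 < eval₂ u v g)
include hV hdef

lemma IsArc.isGSA2_graph_exp_comp_log {ζ : ℝ → ℝ} (h : IsArc (Real.exp ⁻¹' V) ζ) :
    IsGSA2 {q : ℝ × ℝ | q.1 ∈ V ∧ q.2 = Real.exp (ζ (Real.log q.1))} := by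
  classical
  obtain ⟨f, 𝒢, hf⟩ := h.definable
  obtain ⟨𝒱, h𝒱⟩ := hdef
  convert isGSA2_setOf_eval₂_log f (𝒱 ∪ 𝒢) using 3 with q
  have graph_iff (hx : 0 < q.1) (hy : 0 < q.2) :
      (q.1 ∈ V ∧ q.2 = Real.exp (ζ (Real.log q.1))) ↔
        eval₂ (Real.log q.1) (Real.log q.2) f = 0 ∧
          ∀ g ∈ 𝒱 ∪ 𝒢, 0 < eval₂ (Real.log q.1) (Real.log q.2) g := by
    rw [Finset.forall_mem_union, ← h𝒱, Real.exp_log hx, and_left_comm]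
    refine and_congr_right fun hxV => ?_
    rw [← hf _ (mapsTo_log_preimage_exp hV hxV),
      ← Real.exp_eq_exp (x := Real.log _), Real.exp_log hy]
  constructor
  · intro hq
    have hx := hV hq.1
    have hy := hq.2 ▸ Real.exp_pos _
    exact ⟨hx, hy, (graph_iff hx hy).mp hq⟩
  · rintro ⟨hx, hy, hq⟩
    exact (graph_iff hx hy).mpr hq

lemma IsArc.isBranch {ζ : ℝ → ℝ} (h : IsArc (Real.exp ⁻¹' V) ζ) :
    IsBranch V fun x => Real.exp (ζ (Real.log x)) where
  continuousOn := Real.continuous_exp.comp_continuousOn <|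
    h.continuousOn.comp (Real.continuousOn_log.mono fun _ hx => (hV hx).ne')
      (mapsTo_log_preimage_exp hV)
  monotoneOn_or_antitoneOn := by
    have hlog : MonotoneOn Real.log V := Real.strictMonoOn_log.monotoneOn.mono hV
    have hmaps := mapsTo_log_preimage_exp hV
    exact h.monotoneOn_or_antitoneOn.imp
      (fun h => Real.exp_monotone.comp_monotoneOn (h.comp hlog hmaps))
      fun h => Real.exp_monotone.comp_antitoneOn (h.comp_MonotoneOn hlog hmaps)
  isGSA2_graph := h.isGSA2_graph_exp_comp_log hV hdef
  pos _ _ := Real.exp_pos _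

end Branches

section Cylindrical

variable {κ : Type*} {P : κ → ExpSum₂}

lemma IsStratification.exists_strictMonoOn_enumeration {ι : κ → Type*} {I : Set ℝ}
    {ξ : (n : κ) → ι n → ℝ → ℝ} (h : IsStratification P I ξ) (hI : I.Nonempty) {n : κ}
    (hP : P n ≠ 0) :
    ∃ (s : ℕ) (ζ : ℕ → ℝ → ℝ), s < (P n).coeff.support.card ∧
      (∀ j ∈ Icc 1 s, ∃ i, ξ n i = ζ j) ∧
      (∀ u ∈ I, StrictMonoOn (fun j => ζ j u) (Icc 1 s)) ∧
      ∀ u ∈ I, ∀ v, eval₂ u v (P n) = 0 ↔ ∃ j ∈ Icc 1 s, v = ζ j u := by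
  obtain ⟨a, ha⟩ := hI
  have hnd := h.nondegenerate n a ha
  let Z : Finset ℝ := (hnd.finite_roots hP).toFinset
  have mem_Z {v : ℝ} : v ∈ Z ↔ eval₂ a v (P n) = 0 := by simp [Z]
  obtain ⟨b, hb⟩ := ((Finset.eventually_all Z).mpr fun v _ => eventually_lt_atBot v).exists
  obtain ⟨z, -, hz, himage⟩ := exists_strictMonoOn_image_Icc_eq Z hb
  have exists_arc (j : ℕ) (hj : j ∈ Icc 1 Z.card) : ∃ f, (∃ i, ξ n i = f) ∧ f a = z j := by
    obtain ⟨i, hi⟩ := (h.root_iff n a ha (z j)).mp (mem_Z.mp (himage.subset ⟨j, hj, rfl⟩))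
    exact ⟨ξ n i, ⟨i, rfl⟩, hi⟩
  choose! ζ hζ hζa using exists_arc
  refine ⟨Z.card, ζ, hnd.card_roots_lt hP fun v => mem_Z.mp, hζ, ?_, fun u hu v => ?_⟩
  · intro u hu i hi j hj hij
    obtain ⟨i', hi'⟩ := hζ i hi
    obtain ⟨j', hj'⟩ := hζ j hj
    refine (hi' ▸ hj' ▸ h.comparable n n i' j').lt_of_lt ha ?_ hu
    rw [hζa i hi, hζa j hj]
    exact hz hi.2 hj.2 hij
  · rw [h.root_iff n u hu]
    constructor
    · rintro ⟨i, rfl⟩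
      obtain ⟨j, hj, hjz⟩ := himage.superset (mem_Z.mpr ((h.root_iff n a ha _).mpr ⟨i, rfl⟩))
      obtain ⟨j', hj'⟩ := hζ j hj
      exact ⟨j, hj, (hj' ▸ h.comparable n n i j').eq_of_eq ha (by rw [hζa j hj, hjz]) hu⟩
    · rintro ⟨j, hj, rfl⟩
      exact (hζ j hj).imp fun i hi => congrFun hi u

variable (hP : ∀ n, P n ≠ 0) {a : κ → ℝ → ℝ → ℝ}
  (ha : ∀ n u v, eval₂ u v (P n) = a n (Real.exp u) (Real.exp v))
include hP ha

lemma Stratifiable.exists_isCylindrical {V : Set ℝ} (h : Stratifiable P (Real.exp ⁻¹' V))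
    (hne : V.Nonempty) (hV : V ⊆ Ioi 0)
    (hdef : ∃ 𝒱 : Finset ExpSum₂, ∀ u v, Real.exp u ∈ V ↔ ∀ g ∈ 𝒱, 0 < eval₂ u v g) :
    ∃ s ξ, (∀ n, s n < (P n).coeff.support.card) ∧ IsCylindrical a V s ξ := by
  obtain ⟨ι, η, h⟩ := h
  have hlog := mapsTo_log_preimage_exp hV
  choose s ζ hs harc hlt hroot using fun n =>
    h.exists_strictMonoOn_enumeration (hne.image Real.log |>.mono hlog.image_subset) (hP n)
  refine ⟨s, fun n j x => Real.exp (ζ n j (Real.log x)), hs, ?_, ?_, ?_, ?_⟩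
  · intro n j hj
    obtain ⟨i, hi⟩ := harc n j hj
    exact (hi ▸ h.isArc n i).isBranch hV hdef
  · exact fun n x hx => Real.exp_strictMono.comp_strictMonoOn (hlt n _ (hlog hx))
  · intro n x hx y hy
    rw [← Real.exp_log (hV hx), ← Real.exp_log hy, ← ha, hroot n _ (hlog hx)]
    simp only [Real.exp_eq_exp, Real.log_exp]
  · intro n m i hi j hj
    obtain ⟨i', hi'⟩ := harc n i hi
    obtain ⟨j', hj'⟩ := harc m j hj
    exact (hi' ▸ hj' ▸ h.comparable n m i' j').exp_comp_log hV

lemma exists_strips_isCylindrical [Finite κ] :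
    ∃ (L : ℕ) (γ : ℕ → ℝ), γ 0 = 0 ∧ StrictMonoOn γ (Iic L) ∧ ∀ p ≤ L,
      ∃ s ξ, (∀ n, s n < (P n).coeff.support.card) ∧ IsCylindrical a (vstrip γ L p) s ξ := by
  classical
  obtain ⟨E, hE⟩ :=
    exists_finset_forall_ordConnected (antitone_stratifiable P) (eventually_stratifiable hP)
  obtain ⟨γ, hγ0, hγ, himage⟩ := exists_strictMonoOn_image_Icc_eq (E.image Real.exp) (b := 0)
    (Finset.forall_mem_image.mpr fun e _ => Real.exp_pos e)
  refine ⟨_, γ, hγ0, hγ, fun p hp => ?_⟩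
  have hstrat := hE _ (ordConnected_vstrip.preimage_mono Real.exp_monotone) fun e he => by
    obtain ⟨k, hk, hke⟩ := himage.superset (Finset.mem_image_of_mem Real.exp he)
    rw [mem_preimage, ← hke]
    exact notMem_vstrip hγ hp hk.2
  exact Stratifiable.exists_isCylindrical hP ha hstrat (nonempty_vstrip hγ hp)
    (hγ0 ▸ vstrip_subset_Ioi hγ hp) (exists_finset_forall_pos_iff_mem_vstrip γ _ p)

end Cylindrical
end ExpSum

/-- Projection lemma: for a finite family of nonzero generalized polynomial
functions `a n` (given with their unique representations
`a n x y = ∑_{i} aa n i x · y ^ β n i` with `K n` distinct `y`-exponents), there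
is a finite subdivision `0 = γ 0 < … < γ L ( < γ (L+1) = ∞)` of the `x`-axis such
that on each vertical half-strip `H p = (γ p, γ (p+1)) × (0,∞)` the zero set of
each `a n` is the disjoint union of the graphs of `s n p ≤ K n` continuous,
monotonic, generalized semialgebraic functions `0 < ξ n p 1 < … < ξ n p (s n p)`,
and any two such functions satisfy a uniform trichotomy on the strip. -/
theorem projection_lemma (N : ℕ) (a : Fin N → ℝ → ℝ → ℝ)
    (K : Fin N → ℕ) (hK : ∀ n, 0 < K n)
    (β : (n : Fin N) → Fin (K n) → ℝ) (hβ : ∀ n, StrictMono (β n))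
    (aa : (n : Fin N) → Fin (K n) → ℝ → ℝ)
    (haa : ∀ n i, IsGenPoly1 (aa n i))
    (haanz : ∀ n i, ∃ x : ℝ, 0 < x ∧ aa n i x ≠ 0)
    (ha : ∀ n, ∀ x y : ℝ, 0 < x → 0 < y → a n x y = ∑ i, aa n i x * y ^ β n i) :
    ∃ (L : ℕ) (γ : ℕ → ℝ), γ 0 = 0 ∧ StrictMonoOn γ (Set.Iic L) ∧
      ∃ (s : Fin N → ℕ → ℕ) (ξ : Fin N → ℕ → ℕ → ℝ → ℝ),
        (∀ n, ∀ p ≤ L, s n p ≤ K n) ∧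
        (∀ n, ∀ p ≤ L, ∀ j, 1 ≤ j → j ≤ s n p →
          ContinuousOn (ξ n p j) (vstrip γ L p) ∧
          (MonotoneOn (ξ n p j) (vstrip γ L p) ∨
            AntitoneOn (ξ n p j) (vstrip γ L p)) ∧
          IsGSA2 {q : ℝ × ℝ | q.1 ∈ vstrip γ L p ∧ q.2 = ξ n p j q.1}) ∧
        (∀ n, ∀ p ≤ L, ∀ j, 1 ≤ j → j ≤ s n p →
          ∀ x ∈ vstrip γ L p, 0 < ξ n p j x) ∧
        (∀ n, ∀ p ≤ L, ∀ j j', 1 ≤ j → j < j' → j' ≤ s n p →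
          ∀ x ∈ vstrip γ L p, ξ n p j x < ξ n p j' x) ∧
        (∀ n, ∀ p ≤ L, ∀ x ∈ vstrip γ L p, ∀ y : ℝ, 0 < y →
          (a n x y = 0 ↔ ∃ j, 1 ≤ j ∧ j ≤ s n p ∧ y = ξ n p j x)) ∧
        (∀ n₁ n₂, ∀ p ≤ L, ∀ j₁ j₂, 1 ≤ j₁ → j₁ ≤ s n₁ p → 1 ≤ j₂ → j₂ ≤ s n₂ p →
          (∀ x ∈ vstrip γ L p, ξ n₁ p j₁ x < ξ n₂ p j₂ x) ∨
          (∀ x ∈ vstrip γ L p, ξ n₁ p j₁ x = ξ n₂ p j₂ x) ∨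
          (∀ x ∈ vstrip γ L p, ξ n₂ p j₂ x < ξ n₁ p j₁ x)) := by
  choose P hcard hP using fun n =>
    ExpSum.exists_eval₂_eq_sum (hβ n).injective (haa n) (haanz n)
  simp only [Fintype.card_fin] at hcard
  have hP0 (n : Fin N) : P n ≠ 0 := fun h => (hK n).ne (by rw [← hcard, h]; rfl)
  have hPa (n : Fin N) (u v : ℝ) : ExpSum.eval₂ u v (P n) = a n (Real.exp u) (Real.exp v) :=
    (hP n u v).trans (ha n _ _ (Real.exp_pos u) (Real.exp_pos v)).symm
  obtain ⟨L, γ, hγ0, hγ, hstrip⟩ := ExpSum.exists_strips_isCylindrical hP0 hPa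
  choose! s ξ hs hξ using hstrip
  refine ⟨L, γ, hγ0, hγ, fun n p => s p n, fun n p => ξ p n, ?_, ?_, ?_, ?_, ?_, ?_⟩
  · exact fun n p hp => (hcard n ▸ hs p hp n).le
  · intro n p hp j h1 hj
    have h := (hξ p hp).isBranch n j ⟨h1, hj⟩
    exact ⟨h.continuousOn, h.monotoneOn_or_antitoneOn, h.isGSA2_graph⟩
  · exact fun n p hp j h1 hj => ((hξ p hp).isBranch n j ⟨h1, hj⟩).pos
  · exact fun n p hp j j' h1 hjj' hj' x hx =>
      (hξ p hp).strictMonoOn n x hx ⟨h1, hjj'.le.trans hj'⟩ ⟨h1.trans hjj'.le, hj'⟩ hjj'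
  · simpa only [mem_Icc, and_assoc] using fun n p hp => (hξ p hp).zero_iff n
  · exact fun n m p hp i j hi hi' hj hj' => (hξ p hp).comparable n m i ⟨hi, hi'⟩ j ⟨hj, hj'⟩
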